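/- arXiv:1108.1878 — 3 statements merged into one kernel-verified Lean document; each statement's English description precedes it below -/
import Mathlib

section
/- Let ξ ∈ ℝ satisfy |a| < |ξ| < 1 and suppose a sequence of integers {y_n} satisfies y_n = nξ + O(1) as n → ∞. Then there exists a smooth non-negative function G on {η : |a| < |η| < 1} (depending on A and φ but not on n) such that p_n(φ; y_n) = ((1 + (−1)^{n+y_n})|b| / (π n (1 − ξ²)√(ξ² − |a|²))) · e^{−n H_Q(ξ_n)} · (G(ξ) + O(1/n)) as n → ∞, where ξ_n = y_n/n. -/
/-!
The amplitude of the walk after `l` steps to the right and `m` steps to the left is, up to an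
explicit factor, a coefficient of a polynomial `(1 - s X) ^ L * (1 + X) ^ M * (p + q X)` with
`s = |b|² / |a|²` (`amp_formula`): the two Pascal rules for such coefficients are the two rows of
the walk. Everything then rests on the asymptotics of `krw s L M N`, the coefficient of `X ^ N` in
`(1 - s X) ^ L * (1 + X) ^ M`, when `L`, `M`, `N` stay within bounded distance of
`n (1 + ξ) / 2`, `n (1 - ξ) / 2`, `n (1 - ξ) / 2`.

For `|a| < ξ < 1` the dominant saddle point is the real point `-ρ` with
`ρ = (|b| ξ - q) / (|b| (1 + ξ))` and `q = √(ξ² - |a|²)` (`saddle_algebra`). The Cauchy formula on the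
circle through `-ρ` writes the coefficient as an integral over `[-π, π]`. The squared modulus of the
integrand is a product of powers of affine functions of `1 - cos θ`, which together with
`1 + x ≤ e ^ x` gives a Gaussian bound on the whole circle (`integrand_norm_le`). Near `θ = 0` the
phase is `O(|θ| + n |θ|³)` and the real part of the integrand is even in this phase, so the real
part differs from `exp (-n κ θ² / 2)` by at most `O(1/n)` times a wider Gaussian
(`integrand_pointwise`). Integrating gives a relative error `O(1/n)` (`laplace`, `krw_asymptotic`).

The exponential factor obtained at the saddle point is `exp` of minus `n` times the tangent line of
the rate function at `ξ`, evaluated at `y / n` (`base_eq_exp`). Since `y / n - ξ = O(1/n)` and the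
rate function is twice differentiable, replacing the tangent line by the rate function itself costs
a factor `1 + O(1/n)` (`exp_tangent`). This settles `ξ > 0` (`qwP_pos`), and `ξ < 0` follows by
reflecting space and swapping the two components (`qwIter_reflect`). At sites of the wrong parity
both sides vanish.
-/

open Filter Topology Asymptotics MeasureTheory

noncomputable section

/-- One step of the (column-decomposition) quantum walk `U` on functions `ℤ → ℂ²`:
`(Uf)(x) = P f(x+1) + Q f(x-1)` with `P = [[a,0],[-conj b,0]]`, `Q = [[0,b],[0,conj a]]`. -/
def qwStep (a b : ℂ) (f : ℤ → ℂ × ℂ) : ℤ → ℂ × ℂ := fun x =>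
  (a * (f (x + 1)).1 + b * (f (x - 1)).2,
   -(starRingEnd ℂ) b * (f (x + 1)).1 + (starRingEnd ℂ) a * (f (x - 1)).2)

/-- `δ₀ ⊗ φ : ℤ → ℂ²`. -/
def qwDelta (φ : ℂ × ℂ) : ℤ → ℂ × ℂ := fun x => if x = 0 then φ else 0

/-- Squared norm of a vector in `ℂ²`. -/
def nsq (u : ℂ × ℂ) : ℝ := ‖u.1‖ ^ 2 + ‖u.2‖ ^ 2

/-- Transition probability `p_n(φ; y) = ‖(Uⁿ(δ₀ ⊗ φ))(y)‖²`. -/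
def qwP (a b : ℂ) (φ : ℂ × ℂ) (n : ℕ) (y : ℤ) : ℝ :=
  nsq (((qwStep a b)^[n] (qwDelta φ)) y)

/-- `λ_A(φ) = |φ₂|² − |φ₁|² + (1/|a|²)(ab conj(φ₁)φ₂ + conj(ab) φ₁ conj(φ₂))` (a real number). -/
def lamA (a b : ℂ) (φ : ℂ × ℂ) : ℝ :=
  ‖φ.2‖ ^ 2 - ‖φ.1‖ ^ 2 +
    (a * b * (starRingEnd ℂ) φ.1 * φ.2 +
      (starRingEnd ℂ) a * (starRingEnd ℂ) b * φ.1 * (starRingEnd ℂ) φ.2).re / ‖a‖ ^ 2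

/-- `μ(t) = arccos(|a| cos t)`. -/
def muF (a : ℂ) (t : ℝ) : ℝ := Real.arccos (‖a‖ * Real.cos t)

/-- `t(η) = arcsin(|b|η/(|a|√(1 − η²)))`. -/
def tF (a b : ℂ) (η : ℝ) : ℝ := Real.arcsin (‖b‖ * η / (‖a‖ * Real.sqrt (1 - η ^ 2)))

/-- `θ(η) = 2μ(t(η)) − 2η t(η)`. -/
def thetaF (a b : ℂ) (η : ℝ) : ℝ := 2 * muF a (tF a b η) - 2 * η * tF a b η

/-- The rate function `H_Q(ξ)` on `|a| < |ξ| < 1`. -/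
def HQ (a b : ℂ) (ξ : ℝ) : ℝ :=
  2 * |ξ| * Real.log (‖b‖ * |ξ| + Real.sqrt (ξ ^ 2 - ‖a‖ ^ 2)) -
    2 * Real.log (‖b‖ + Real.sqrt (ξ ^ 2 - ‖a‖ ^ 2)) +
    (1 - |ξ|) * Real.log (1 - ξ ^ 2) - 2 * |ξ| * Real.log ‖a‖

/-! ### Amplitudes as polynomial coefficients -/

open Polynomial in
/-- The Krawtchouk-type coefficient `[X^N] (1 - s X)^L (1 + X)^M`. -/
def krw (s : ℝ) (L M N : ℕ) : ℝ :=
  ((1 - C s * X) ^ L * (1 + X) ^ M : ℝ[X]).coeff N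

open Polynomial in
/-- The coefficient `[X^N] (1 - s X)^L (1 + X)^M (p + q X)`. -/
def krwT (s : ℝ) (p q : ℂ) (L M N : ℕ) : ℂ :=
  ((1 - C (s : ℂ) * X) ^ L * (1 + X) ^ M * (C p + C q * X) : ℂ[X]).coeff N

open Polynomial in
theorem krwT_succ (s : ℝ) (p q : ℂ) (L M N : ℕ) :
    krwT s p q L M (N + 1) = p * krw s L M (N + 1) + q * krw s L M N := by
  have h : ((1 - C (s : ℂ) * X) ^ L * (1 + X) ^ M : ℂ[X])
      = ((1 - C s * X) ^ L * (1 + X) ^ M : ℝ[X]).map Complex.ofRealHom := by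
    simp [Polynomial.map_mul, Polynomial.map_pow]
  unfold krwT krw
  rw [h, mul_add, coeff_add, coeff_mul_C, ← mul_assoc, coeff_mul_X, coeff_mul_C, coeff_map,
    coeff_map]
  simp only [Complex.ofRealHom_eq_coe]
  ring

open Polynomial in
theorem krwT_pascal_right (s : ℝ) (p q : ℂ) (L M N : ℕ) :
    krwT s p q L (M + 1) (N + 1) = krwT s p q L M N + krwT s p q L M (N + 1) := by
  unfold krwT
  rw [show ((1 - C (s : ℂ) * X) ^ L * (1 + X) ^ (M + 1) * (C p + C q * X) : ℂ[X])
    = ((1 - C (s : ℂ) * X) ^ L * (1 + X) ^ M * (C p + C q * X)) * X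
      + (1 - C (s : ℂ) * X) ^ L * (1 + X) ^ M * (C p + C q * X) by ring, coeff_add, coeff_mul_X]

open Polynomial in
theorem krwT_pascal_left (s : ℝ) (p q : ℂ) (L M N : ℕ) :
    krwT s p q (L + 1) M (N + 1) = -s * krwT s p q L M N + krwT s p q L M (N + 1) := by
  unfold krwT
  rw [show ((1 - C (s : ℂ) * X) ^ (L + 1) * (1 + X) ^ M * (C p + C q * X) : ℂ[X])
    = C (-(s : ℂ)) * (((1 - C (s : ℂ) * X) ^ L * (1 + X) ^ M * (C p + C q * X)) * X)
      + (1 - C (s : ℂ) * X) ^ L * (1 + X) ^ M * (C p + C q * X) by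
        rw [C_neg]; ring, coeff_add, coeff_C_mul, coeff_mul_X]

open Polynomial in
theorem krwT_right_zero (s : ℝ) (p q : ℂ) (L : ℕ) : krwT s p q L 0 0 = p := by
  simp [krwT, coeff_zero_eq_eval_zero]

open Polynomial in
theorem krwT_left_zero (s : ℝ) (p q : ℂ) (M : ℕ) : krwT s p q 0 M (M + 1) = q := by
  rw [krwT_succ]
  simp [krw, coeff_one_add_X_pow]

theorem qwIter_succ (a b : ℂ) (φ : ℂ × ℂ) (n : ℕ) (x : ℤ) :
    (qwStep a b)^[n + 1] (qwDelta φ) x =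
      (a * ((qwStep a b)^[n] (qwDelta φ) (x + 1)).1 + b * ((qwStep a b)^[n] (qwDelta φ) (x - 1)).2,
       -(starRingEnd ℂ) b * ((qwStep a b)^[n] (qwDelta φ) (x + 1)).1
        + (starRingEnd ℂ) a * ((qwStep a b)^[n] (qwDelta φ) (x - 1)).2) := by
  rw [Function.iterate_succ_apply']
  rfl

theorem qwIter_support (a b : ℂ) (φ : ℂ × ℂ) (n : ℕ) :
    ∀ x : ℤ, (n : ℤ) < |x| → (qwStep a b)^[n] (qwDelta φ) x = 0 := by
  induction n with
  | zero =>
    intro x hx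
    have : x ≠ 0 := by rintro rfl; simp at hx
    simp [qwDelta, this]
  | succ n ih =>
    intro x hx
    rw [qwIter_succ, ih (x + 1) (by grind), ih (x - 1) (by grind)]
    simp

theorem qwIter_parity (a b : ℂ) (φ : ℂ × ℂ) (n : ℕ) :
    ∀ x : ℤ, Odd ((n : ℤ) + x) → (qwStep a b)^[n] (qwDelta φ) x = 0 := by
  induction n with
  | zero =>
    intro x hx
    have : x ≠ 0 := by rintro rfl; simp at hx
    simp [qwDelta, this]
  | succ n ih =>
    intro x hx
    rw [qwIter_succ, ih (x + 1) (by grind), ih (x - 1) (by grind)]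
    simp

/-- The amplitude at time `l + m` at the site reached by `l` right and `m` left moves. -/
def amp (a b : ℂ) (φ : ℂ × ℂ) (l m : ℕ) : ℂ × ℂ :=
  (qwStep a b)^[l + m] (qwDelta φ) ((l : ℤ) - m)

theorem amp_succ (a b : ℂ) (φ : ℂ × ℂ) (l m : ℕ) :
    amp a b φ (l + 1) (m + 1) =
      (a * (amp a b φ (l + 1) m).1 + b * (amp a b φ l (m + 1)).2,
       -(starRingEnd ℂ) b * (amp a b φ (l + 1) m).1
        + (starRingEnd ℂ) a * (amp a b φ l (m + 1)).2) := by
  unfold amp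
  rw [show l + 1 + (m + 1) = (l + 1 + m) + 1 by ring, qwIter_succ,
    show l + (m + 1) = l + 1 + m by ring]
  push_cast
  rw [show (l : ℤ) + 1 - (m + 1) + 1 = l + 1 - m by ring,
    show (l : ℤ) + 1 - (m + 1) - 1 = l - (m + 1) by ring]

theorem amp_right (a b : ℂ) (φ : ℂ × ℂ) (l : ℕ) :
    amp a b φ (l + 1) 0 =
      (b * (amp a b φ l 0).2, (starRingEnd ℂ) a * (amp a b φ l 0).2) := by
  have h := qwIter_support a b φ l ((l : ℤ) + 1 + 1) (by grind)
  simp only [amp, Nat.cast_add, Nat.cast_one, Nat.cast_zero, sub_zero, add_zero]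
  rw [qwIter_succ, h]
  simp

theorem amp_left (a b : ℂ) (φ : ℂ × ℂ) (m : ℕ) :
    amp a b φ 0 (m + 1) =
      (a * (amp a b φ 0 m).1, -(starRingEnd ℂ) b * (amp a b φ 0 m).1) := by
  have h := qwIter_support a b φ m (-((m : ℤ) + 1) - 1) (by grind)
  simp only [amp, Nat.cast_add, Nat.cast_one, Nat.cast_zero, zero_sub, zero_add]
  rw [qwIter_succ, h, show -((m : ℤ) + 1) + 1 = -m by ring]
  simp

theorem amp_right_snd (a b : ℂ) (φ : ℂ × ℂ) (l : ℕ) :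
    (amp a b φ l 0).2 = (starRingEnd ℂ) a ^ l * φ.2 := by
  induction l with
  | zero => simp [amp, qwDelta]
  | succ l ih => rw [amp_right, ih]; simp only; ring

theorem amp_left_fst (a b : ℂ) (φ : ℂ × ℂ) (m : ℕ) :
    (amp a b φ 0 m).1 = a ^ m * φ.1 := by
  induction m with
  | zero => simp [amp, qwDelta]
  | succ l ih => rw [amp_left, ih]; simp only; ring

/-- Closed form of the amplitudes. The first component is given for `l ≥ 1`, the second for
`m ≥ 1`; in this range both Pascal rules for `krwT` match the two rows of the walk. -/
theorem amp_formula (a b : ℂ) (ha : a ≠ 0) (φ : ℂ × ℂ) (s : ℝ)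
    (hs : (s : ℂ) * (a * (starRingEnd ℂ) a) = b * (starRingEnd ℂ) b) (n : ℕ) :
    ∀ l m : ℕ, l + m = n →
      (amp a b φ (l + 1) m).1 = a ^ m * (starRingEnd ℂ) a ^ l * b *
        krwT s φ.2 (-((starRingEnd ℂ) b / a) * φ.1) l m m ∧
      (amp a b φ l (m + 1)).2 = a ^ (m + 1) * (starRingEnd ℂ) a ^ l *
        krwT s φ.2 (-((starRingEnd ℂ) b / a) * φ.1) l m (m + 1) := by
  induction n with
  | zero =>
    intro l m h
    obtain ⟨rfl, rfl⟩ : l = 0 ∧ m = 0 := by omega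
    rw [amp_right, amp_left, amp_right_snd, amp_left_fst, krwT_right_zero, krwT_left_zero]
    constructor
    · simp
    · field_simp
      ring
  | succ n ih =>
    intro l m h
    constructor
    · rcases m with _ | m
      · rw [amp_right, amp_right_snd, krwT_right_zero]
        simp only; ring
      · rw [amp_succ, krwT_pascal_right, (ih l m (by omega)).1, (ih l m (by omega)).2]
        simp only; ring
    · rcases l with _ | l
      · rw [amp_left, amp_left_fst, krwT_left_zero]
        simp only; field_simp; ring
      · rw [amp_succ, krwT_pascal_left, (ih l m (by omega)).1, (ih l m (by omega)).2]
        simp only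
        linear_combination (a ^ m * (starRingEnd ℂ) a ^ l *
          krwT s φ.2 (-((starRingEnd ℂ) b / a) * φ.1) l m m) * hs

/-! ### The coefficient integral and its normalised factors -/

open Polynomial in
/-- The Cauchy coefficient formula on the circle of radius `‖z‖`, for polynomials. -/
theorem coeff_eq_integral (P : ℂ[X]) (z : ℂ) (N : ℕ) :
    ∫ θ in -Real.pi..Real.pi, P.eval (z * Complex.exp (θ * Complex.I)) *
        Complex.exp (-(N * θ * Complex.I)) = 2 * Real.pi * (P.coeff N * z ^ N) := by
  induction P using Polynomial.induction_on' with
  | add p q hp hq =>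
    simp only [eval_add, add_mul, coeff_add]
    rw [intervalIntegral.integral_add, hp, hq]
    · ring
    · exact Continuous.intervalIntegrable (by fun_prop) _ _
    · exact Continuous.intervalIntegrable (by fun_prop) _ _
  | monomial j c =>
    have h : ∀ θ : ℝ, (monomial j c).eval (z * Complex.exp (θ * Complex.I)) *
        Complex.exp (-(N * θ * Complex.I))
        = c * z ^ j * Complex.exp ((((j : ℤ) - (N : ℤ) : ℤ) * Complex.I) * θ) := by
      intro θ
      rw [eval_monomial, mul_pow, ← Complex.exp_nat_mul, mul_assoc, mul_assoc, ← Complex.exp_add,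
        mul_assoc]
      push_cast
      ring_nf
    simp only [h]
    rw [intervalIntegral.integral_const_mul, coeff_monomial]
    by_cases hj : j = N
    · subst hj
      simp
      ring
    · have h0 : (((j : ℤ) - (N : ℤ) : ℤ) : ℂ) ≠ 0 :=
        Int.cast_ne_zero.mpr (by omega)
      rw [integral_exp_mul_complex (mul_ne_zero h0 Complex.I_ne_zero)]
      have : Complex.exp ((((j : ℤ) - (N : ℤ) : ℤ) * Complex.I) * (Real.pi : ℝ))
          = Complex.exp ((((j : ℤ) - (N : ℤ) : ℤ) * Complex.I) * ((-Real.pi : ℝ) : ℂ)) := by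
        rw [Complex.exp_eq_exp_iff_exists_int]
        exact ⟨(j : ℤ) - N, by push_cast; ring⟩
      rw [this]
      simp [hj]

/-- The normalised factor `(1 + k e^{iθ}) / (1 + k)`, equal to `1` at `θ = 0`. -/
def kern (k θ : ℝ) : ℂ := (1 + k * Complex.exp (θ * Complex.I)) / (1 + k)

/-- The normalised integrand of the coefficient integral for `krw`. -/
def integrand (k₁ k₂ : ℝ) (L M N : ℕ) (θ : ℝ) : ℂ :=
  kern k₁ θ ^ L * kern k₂ θ ^ M * Complex.exp (-(N * θ * Complex.I))

theorem continuous_integrand (k₁ k₂ : ℝ) (L M N : ℕ) : Continuous (integrand k₁ k₂ L M N) := by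
  unfold integrand kern
  fun_prop

open Polynomial in
/-- The coefficient formula for `krw` on the circle through the negative real point `-ρ`, with the
value of the polynomial at `-ρ` factored out. The coefficient is real, so only the real part of
the integrand matters. -/
theorem krw_eq_integral (s ρ : ℝ) (hs : 0 < s) (hρ : 0 < ρ) (hρ1 : ρ < 1) (L M N : ℕ) :
    krw s L M N * (-ρ) ^ N * (2 * Real.pi) =
      (1 + s * ρ) ^ L * (1 - ρ) ^ M *
        ∫ θ in -Real.pi..Real.pi, (integrand (s * ρ) (-ρ) L M N θ).re := by
  have h1 : (1 + (s : ℂ) * ρ) ≠ 0 := by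
    have : 0 < 1 + s * ρ := by positivity
    exact_mod_cast this.ne'
  have h2 : (1 - (ρ : ℂ)) ≠ 0 := by
    have : 0 < 1 - ρ := by linarith
    exact_mod_cast this.ne'
  have key := coeff_eq_integral
    (((1 - C s * X) ^ L * (1 + X) ^ M : ℝ[X]).map Complex.ofRealHom) (-(ρ : ℂ)) N
  have h : ∀ θ : ℝ, (((1 - C s * X) ^ L * (1 + X) ^ M : ℝ[X]).map Complex.ofRealHom).eval
      (-(ρ : ℂ) * Complex.exp (θ * Complex.I)) * Complex.exp (-(N * θ * Complex.I))
      = ((1 + (s : ℂ) * ρ) ^ L * (1 - (ρ : ℂ)) ^ M) * integrand (s * ρ) (-ρ) L M N θ := by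
    intro θ
    simp only [integrand, kern, Polynomial.map_mul, Polynomial.map_pow, Polynomial.map_sub,
      Polynomial.map_add, Polynomial.map_one, Polynomial.map_X, Polynomial.map_C, eval_mul,
      eval_pow, eval_sub, eval_add, eval_one, eval_X, eval_C, Complex.ofRealHom_eq_coe, div_pow]
    push_cast
    rw [← sub_eq_add_neg]
    field_simp
    ring
  simp only [h] at key
  rw [intervalIntegral.integral_const_mul, coeff_map] at key
  have hre : (∫ θ in -Real.pi..Real.pi, integrand (s * ρ) (-ρ) L M N θ).re
      = ∫ θ in -Real.pi..Real.pi, (integrand (s * ρ) (-ρ) L M N θ).re := by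
    have := (Complex.reCLM).intervalIntegral_comp_comm
      ((continuous_integrand (s * ρ) (-ρ) L M N).intervalIntegrable (μ := volume)
        (-Real.pi) Real.pi)
    simpa using this.symm
  have key2 := congrArg Complex.re key
  rw [← hre]
  have e1 : ((1 + (s : ℂ) * ρ) ^ L * (1 - (ρ : ℂ)) ^ M)
      = (((1 + s * ρ) ^ L * (1 - ρ) ^ M : ℝ) : ℂ) := by push_cast; ring
  have e2 : (2 * (Real.pi : ℂ) * (Complex.ofRealHom
      (((1 - C s * X) ^ L * (1 + X) ^ M : ℝ[X]).coeff N) * (-(ρ : ℂ)) ^ N))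
      = ((krw s L M N * (-ρ) ^ N * (2 * Real.pi) : ℝ) : ℂ) := by
    simp only [krw, Complex.ofRealHom_eq_coe]; push_cast; ring
  rw [e1, e2, Complex.re_ofReal_mul, Complex.ofReal_re] at key2
  exact key2.symm

theorem kern_norm_sq (k θ : ℝ) (hk : -1 < k) :
    ‖kern k θ‖ ^ 2 = 1 - 2 * (k / (1 + k) ^ 2) * (1 - Real.cos θ) := by
  have h : (1 + k) ≠ 0 := by linarith
  have e : kern k θ = (((1 + k * Real.cos θ) / (1 + k) : ℝ) : ℂ)
      + ((k * Real.sin θ / (1 + k) : ℝ) : ℂ) * Complex.I := by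
    unfold kern
    rw [Complex.exp_mul_I]
    push_cast
    ring
  rw [← Complex.normSq_eq_norm_sq, e, Complex.normSq_add_mul_I]
  field_simp
  linear_combination k ^ 2 * Real.sin_sq_add_cos_sq θ

/-- Polar form of `kern`: the phase is linear in `θ` up to a cubic error. -/
theorem kern_polar (k : ℝ) (hk : -1 < k) :
    ∃ C : ℝ, 0 ≤ C ∧ ∀ θ : ℝ, |θ| ≤ 1 → ∃ ω : ℝ,
      kern k θ = ‖kern k θ‖ * Complex.exp (ω * Complex.I) ∧
        |ω - k / (1 + k) * θ| ≤ C * |θ| ^ 3 := by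
  have hk1 : 0 < 1 + k := by linarith
  set d : ℝ := min 1 ((1 + k) ^ 2) with hd
  have hd0 : 0 < d := lt_min one_pos (by positivity)
  have hcos : ∀ θ : ℝ, |θ| ≤ 1 → 0 < Real.cos θ := fun θ hθ => Real.cos_pos_of_le_one hθ
  have hre : ∀ θ : ℝ, |θ| ≤ 1 → 0 < 1 + k * Real.cos θ := by
    intro θ hθ
    nlinarith [hcos θ hθ, Real.cos_le_one θ]
  have hden : ∀ θ : ℝ, |θ| ≤ 1 → d ≤ 1 + k ^ 2 + 2 * k * Real.cos θ := by
    intro θ hθ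
    rcases le_total 0 k with h | h
    · exact (min_le_left _ _).trans (by nlinarith [mul_nonneg h (hcos θ hθ).le])
    · exact (min_le_right _ _).trans (by nlinarith [Real.cos_le_one θ])
  have hderiv : ∀ θ : ℝ, |θ| ≤ 1 → HasDerivAt
      (fun t : ℝ => (Complex.log (1 + k * Complex.exp (t * Complex.I))).im - k / (1 + k) * t)
      ((k ^ 2 + k * Real.cos θ) / (1 + k ^ 2 + 2 * k * Real.cos θ) - k / (1 + k)) θ := by
    intro θ hθ
    have hz : (1 + k * Complex.exp (θ * Complex.I)) ∈ Complex.slitPlane := by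
      left
      simpa [Complex.exp_re] using hre θ hθ
    have h1 : HasDerivAt (fun t : ℝ => (1 + k * Complex.exp (t * Complex.I) : ℂ))
        (k * (Complex.exp (θ * Complex.I) * Complex.I)) θ := by
      have h2 : HasDerivAt (fun t : ℝ => ((t : ℂ) * Complex.I)) Complex.I θ := by
        simpa using (Complex.ofRealCLM.hasDerivAt (x := θ)).mul_const Complex.I
      exact (h2.cexp.const_mul (k : ℂ)).const_add 1
    have h3 := h1.clog_real hz
    have h4 := (Complex.imCLM.hasFDerivAt.comp_hasDerivAt θ h3).sub
      ((hasDerivAt_id θ).const_mul (k / (1 + k)))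
    refine h4.congr_deriv ?_
    rw [mul_one]
    congr 1
    have e : (1 + k * Complex.exp (θ * Complex.I) : ℂ)
        = ((1 + k * Real.cos θ : ℝ) : ℂ) + ((k * Real.sin θ : ℝ) : ℂ) * Complex.I := by
      rw [Complex.exp_mul_I]; push_cast; ring
    have e' : (k * (Complex.exp (θ * Complex.I) * Complex.I) : ℂ)
        = ((-(k * Real.sin θ) : ℝ) : ℂ) + ((k * Real.cos θ : ℝ) : ℂ) * Complex.I := by
      rw [Complex.exp_mul_I]; push_cast
      linear_combination (k * Complex.sin θ) * Complex.I_sq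
    have hne := (hd0.trans_le (hden θ hθ)).ne'
    rw [Complex.imCLM_apply, e, e', Complex.div_im, Complex.normSq_add_mul_I]
    have hN : (1 + k * Real.cos θ) ^ 2 + (k * Real.sin θ) ^ 2
        = 1 + k ^ 2 + 2 * k * Real.cos θ := by
      linear_combination k ^ 2 * Real.sin_sq_add_cos_sq θ
    rw [hN]
    simp only [Complex.add_im, Complex.add_re, Complex.ofReal_re, Complex.ofReal_im,
      Complex.mul_im, Complex.mul_re, Complex.I_re, Complex.I_im]
    rw [← sub_div]
    congr 1
    linear_combination k ^ 2 * Real.sin_sq_add_cos_sq θ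
  set K : ℝ := |k * (k - 1)| / ((1 + k) * d) with hK
  have hK0 : 0 ≤ K := by positivity
  refine ⟨K, hK0, fun θ hθ => ⟨(Complex.log (1 + k * Complex.exp (θ * Complex.I))).im, ?_, ?_⟩⟩
  · have hne : (1 + (k : ℂ)) ≠ 0 := by exact_mod_cast hk1.ne'
    have hn : ‖kern k θ‖ = ‖(1 + k * Complex.exp (θ * Complex.I) : ℂ)‖ / (1 + k) := by
      unfold kern
      rw [norm_div]
      congr 1
      rw [show (1 + (k : ℂ)) = ((1 + k : ℝ) : ℂ) by push_cast; ring, Complex.norm_real,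
        Real.norm_of_nonneg hk1.le]
    rw [hn, Complex.log_im]
    conv_lhs => rw [kern, ← Complex.norm_mul_exp_arg_mul_I (1 + k * Complex.exp (θ * Complex.I))]
    push_cast
    ring
  · have hb : ∀ t ∈ Set.Icc (-|θ|) |θ|,
        ‖(k ^ 2 + k * Real.cos t) / (1 + k ^ 2 + 2 * k * Real.cos t) - k / (1 + k)‖
          ≤ K * |θ| ^ 2 := by
      intro t ht
      have ht' : |t| ≤ |θ| := abs_le.mpr ht
      have h := hden t (ht'.trans hθ)
      have hp := hd0.trans_le h
      have e : (k ^ 2 + k * Real.cos t) / (1 + k ^ 2 + 2 * k * Real.cos t) - k / (1 + k)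
          = k * (k - 1) * (1 - Real.cos t) / ((1 + k) * (1 + k ^ 2 + 2 * k * Real.cos t)) := by
        rw [div_sub_div _ _ hp.ne' hk1.ne', mul_comm (1 + k)]
        congr 1
        ring
      have hc0 : 0 ≤ 1 - Real.cos t := by linarith [Real.cos_le_one t]
      have hc : 1 - Real.cos t ≤ |θ| ^ 2 := by
        have := Real.one_sub_sq_div_two_le_cos (x := t)
        have h2 : t ^ 2 ≤ |θ| ^ 2 := by rw [← sq_abs t]; gcongr
        nlinarith [sq_nonneg t]
      rw [e, Real.norm_eq_abs, abs_div, abs_mul, abs_of_nonneg hc0, abs_of_pos (mul_pos hk1 hp), hK,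
        div_mul_eq_mul_div]
      gcongr
    have := Convex.norm_image_sub_le_of_norm_hasDerivWithin_le
      (fun t ht => (hderiv t ((abs_le.mpr ht).trans hθ)).hasDerivWithinAt) hb
      (convex_Icc (-|θ|) |θ|) (x := 0) (y := θ)
      ⟨neg_nonpos.mpr (abs_nonneg θ), abs_nonneg θ⟩ ⟨neg_abs_le θ, le_abs_self θ⟩
    have h0 : (Complex.log (1 + (k : ℂ))).im = 0 := by
      rw [Complex.log_im, show (1 + (k : ℂ)) = ((1 + k : ℝ) : ℂ) by push_cast; ring,
        Complex.arg_ofReal_of_nonneg hk1.le]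
    simp [h0] at this
    calc _ ≤ K * θ ^ 2 * |θ| := by simpa using this
      _ = K * |θ| ^ 3 := by rw [← sq_abs θ]; ring

/-! ### Modulus and phase of the integrand -/

theorem cubic_mul_exp_le (c : ℝ) (hc : 0 < c) :
    ∃ C : ℝ, 0 < C ∧ ∀ t : ℝ, 0 ≤ t →
      (t + t ^ 2 + t ^ 3) * Real.exp (-(2 * c * t)) ≤ C * Real.exp (-(c * t)) := by
  refine ⟨1 / c + 2 / c ^ 2 + 6 / c ^ 3, by positivity, fun t ht => ?_⟩
  have hct : 0 ≤ c * t := by positivity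
  have h1 := Real.pow_div_factorial_le_exp (c * t) hct 1
  have h2 := Real.pow_div_factorial_le_exp (c * t) hct 2
  have h3 := Real.pow_div_factorial_le_exp (c * t) hct 3
  norm_num [Nat.factorial] at h1 h2 h3
  have e : Real.exp (-(c * t)) = Real.exp (c * t) * Real.exp (-(2 * c * t)) := by
    rw [← Real.exp_add]; congr 1; ring
  rw [e, ← mul_assoc]
  refine mul_le_mul_of_nonneg_right ?_ (Real.exp_pos _).le
  have k1 : t = 1 / c * (c * t) := by field_simp
  have k2 : t ^ 2 = 2 / c ^ 2 * ((c * t) ^ 2 / 2) := by field_simp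
  have k3 : t ^ 3 = 6 / c ^ 3 * ((c * t) ^ 3 / 6) := by field_simp
  calc t + t ^ 2 + t ^ 3
      = 1 / c * (c * t) + 2 / c ^ 2 * ((c * t) ^ 2 / 2) + 6 / c ^ 3 * ((c * t) ^ 3 / 6) := by
        rw [← k1, ← k2, ← k3]
    _ ≤ 1 / c * Real.exp (c * t) + 2 / c ^ 2 * Real.exp (c * t)
          + 6 / c ^ 3 * Real.exp (c * t) := by
        gcongr
    _ = _ := by ring

theorem abs_exp_sub_exp_le {A B m : ℝ} (hA : A ≤ m) (hB : B ≤ m) :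
    |Real.exp A - Real.exp B| ≤ Real.exp m * |A - B| := by
  wlog h : B ≤ A generalizing A B
  · rw [abs_sub_comm, abs_sub_comm A]
    exact this hB hA (le_of_not_ge h)
  have h1 : Real.exp B ≤ Real.exp A := Real.exp_le_exp.mpr h
  rw [abs_of_nonneg (sub_nonneg.mpr h1), abs_of_nonneg (sub_nonneg.mpr h)]
  have h2 := Real.add_one_le_exp (B - A)
  have h3 : Real.exp B = Real.exp A * Real.exp (B - A) := by rw [← Real.exp_add]; congr 1; ring
  have h4 : Real.exp A ≤ Real.exp m := Real.exp_le_exp.mpr hA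
  have h5 : 0 ≤ A - B := by linarith
  calc Real.exp A - Real.exp B = Real.exp A * (1 - Real.exp (B - A)) := by rw [h3]; ring
    _ ≤ Real.exp A * (A - B) :=
        mul_le_mul_of_nonneg_left (by linarith) (Real.exp_pos A).le
    _ ≤ Real.exp m * (A - B) := by gcongr

theorem abs_log_one_sub_add_le {x : ℝ} (hx : |x| ≤ 1 / 2) : |Real.log (1 - x) + x| ≤ 2 * x ^ 2 := by
  have h := Real.abs_log_sub_add_sum_range_le (x := x) (by linarith) 1
  simp only [Finset.sum_range_one, zero_add, pow_one, Nat.cast_zero, div_one] at h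
  rw [add_comm]
  refine h.trans ?_
  rw [div_le_iff₀ (by linarith), show (1 + 1) = 2 from rfl, sq_abs]
  nlinarith [sq_nonneg x]

theorem integrand_norm_sq (k₁ k₂ : ℝ) (hk₁ : -1 < k₁) (hk₂ : -1 < k₂) (L M N : ℕ) (θ : ℝ) :
    ‖integrand k₁ k₂ L M N θ‖ ^ 2 =
      (1 - 2 * (k₁ / (1 + k₁) ^ 2) * (1 - Real.cos θ)) ^ L *
        (1 - 2 * (k₂ / (1 + k₂) ^ 2) * (1 - Real.cos θ)) ^ M := by
  have h : ‖Complex.exp (-(N * θ * Complex.I))‖ = 1 := by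
    rw [show (-(N * θ * Complex.I) : ℂ) = ((-(N * θ) : ℝ) : ℂ) * Complex.I by push_cast; ring]
    exact Complex.norm_exp_ofReal_mul_I _
  rw [integrand, norm_mul, h, mul_one, norm_mul, norm_pow, norm_pow, ← kern_norm_sq k₁ θ hk₁,
    ← kern_norm_sq k₂ θ hk₂]
  ring

/-- Gaussian domination on the whole circle. It only uses `1 + x ≤ e ^ x`, since
`‖integrand‖²` is a product of powers of affine functions of `1 - cos θ`. -/
theorem integrand_norm_le (k₁ k₂ : ℝ) (hk₁ : -1 < k₁) (hk₂ : -1 < k₂) (L M N : ℕ) (κ : ℝ) (n : ℕ)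
    (hΛ : n * κ / 2 ≤ k₁ / (1 + k₁) ^ 2 * L + k₂ / (1 + k₂) ^ 2 * M) (hκ : 0 < κ)
    (θ : ℝ) (hθ : |θ| ≤ Real.pi) :
    ‖integrand k₁ k₂ L M N θ‖ ≤ Real.exp (-(κ / Real.pi ^ 2 * (n * θ ^ 2))) := by
  have hτ := Real.cos_le_one_sub_mul_cos_sq hθ
  set τ := 1 - Real.cos θ with hτd
  have hτ' : 2 / Real.pi ^ 2 * θ ^ 2 ≤ τ := by linarith
  refine le_of_sq_le_sq ?_ (Real.exp_pos _).le
  have hp : ∀ k : ℝ, -1 < k → ∀ J : ℕ, 0 ≤ (1 - 2 * (k / (1 + k) ^ 2) * τ) ^ J ∧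
      (1 - 2 * (k / (1 + k) ^ 2) * τ) ^ J ≤ Real.exp (-(2 * (k / (1 + k) ^ 2) * τ) * J) := by
    intro k hk J
    have h0 : 0 ≤ 1 - 2 * (k / (1 + k) ^ 2) * τ := by
      rw [← kern_norm_sq k θ hk]; positivity
    refine ⟨pow_nonneg h0 _, ?_⟩
    rw [mul_comm _ (J : ℝ), Real.exp_nat_mul]
    refine pow_le_pow_left₀ h0 ?_ _
    linarith [Real.add_one_le_exp (-(2 * (k / (1 + k) ^ 2) * τ))]
  rw [integrand_norm_sq k₁ k₂ hk₁ hk₂, ← Real.exp_nat_mul]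
  refine (mul_le_mul (hp k₁ hk₁ L).2 (hp k₂ hk₂ M).2 (hp k₂ hk₂ M).1 (Real.exp_pos _).le).trans ?_
  rw [← Real.exp_add, Real.exp_le_exp]
  have hτ0 : 0 ≤ τ := le_trans (by positivity) hτ'
  have h1 := mul_le_mul_of_nonneg_left hΛ hτ0
  have h2 : 2 / Real.pi ^ 2 * θ ^ 2 * (n * κ) ≤ τ * (n * κ) :=
    mul_le_mul_of_nonneg_right hτ' (by positivity)
  have h3 : ((2 : ℕ) : ℝ) * -(κ / Real.pi ^ 2 * (n * θ ^ 2))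
    = -(2 / Real.pi ^ 2 * θ ^ 2 * (n * κ)) := by push_cast; ring
  rw [h3]
  nlinarith

/-- Near the saddle, the real part of the integrand is its modulus times the cosine of a phase
which is of size `θ + n θ³`, because the linear terms in the phase cancel to leading order. -/
theorem integrand_phase (k₁ k₂ : ℝ) (hk₁ : -1 < k₁) (hk₂ : -1 < k₂) (lam mu nu D : ℝ)
    (hD : 0 ≤ D) (hlam : 0 ≤ lam) (hmu : 0 ≤ mu)
    (hsad : lam * (k₁ / (1 + k₁)) + mu * (k₂ / (1 + k₂)) = nu) :
    ∃ C : ℝ, 0 ≤ C ∧ ∀ n L M N : ℕ, 1 ≤ n → |(L : ℝ) - n * lam| ≤ D → |(M : ℝ) - n * mu| ≤ D →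
      |(N : ℝ) - n * nu| ≤ D → ∀ θ : ℝ, |θ| ≤ 1 → ∃ Ω : ℝ,
        (integrand k₁ k₂ L M N θ).re = ‖integrand k₁ k₂ L M N θ‖ * Real.cos Ω ∧
        |Ω| ≤ C * (|θ| + n * |θ| ^ 3) := by
  obtain ⟨C₁, hC₁, h₁⟩ := kern_polar k₁ hk₁
  obtain ⟨C₂, hC₂, h₂⟩ := kern_polar k₂ hk₂
  set r₁ := k₁ / (1 + k₁)
  set r₂ := k₂ / (1 + k₂)
  refine ⟨D * (|r₁| + |r₂| + 1) + ((lam + D) * C₁ + (mu + D) * C₂), by positivity, ?_⟩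
  intro n L M N hn hL hM hN θ hθ
  obtain ⟨ω₁, e₁, b₁⟩ := h₁ θ hθ
  obtain ⟨ω₂, e₂, b₂⟩ := h₂ θ hθ
  have hn' : (1 : ℝ) ≤ n := by exact_mod_cast hn
  have hphase : integrand k₁ k₂ L M N θ = ((‖kern k₁ θ‖ ^ L * ‖kern k₂ θ‖ ^ M : ℝ) : ℂ) *
      Complex.exp (((L * ω₁ + M * ω₂ - N * θ : ℝ) : ℂ) * Complex.I) := by
    rw [integrand]
    conv_lhs => rw [e₁, e₂]
    rw [mul_pow, mul_pow, ← Complex.exp_nat_mul, ← Complex.exp_nat_mul]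
    rw [show (((L * ω₁ + M * ω₂ - N * θ : ℝ) : ℂ) * Complex.I)
      = (L : ℂ) * (ω₁ * Complex.I) + (M : ℂ) * (ω₂ * Complex.I) + -(N * θ * Complex.I) by
        push_cast; ring, Complex.exp_add, Complex.exp_add]
    push_cast
    ring
  refine ⟨L * ω₁ + M * ω₂ - N * θ, ?_, ?_⟩
  · have hnorm : ‖integrand k₁ k₂ L M N θ‖ = ‖kern k₁ θ‖ ^ L * ‖kern k₂ θ‖ ^ M := by
      rw [hphase, norm_mul, Complex.norm_exp_ofReal_mul_I, mul_one, Complex.norm_real,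
        Real.norm_of_nonneg (by positivity)]
    rw [hnorm, hphase, Complex.re_ofReal_mul, Complex.exp_ofReal_mul_I_re]
  · have hLn : (L : ℝ) ≤ (lam + D) * n := by nlinarith [(abs_le.mp hL).2]
    have hMn : (M : ℝ) ≤ (mu + D) * n := by nlinarith [(abs_le.mp hM).2]
    have e : L * ω₁ + M * ω₂ - N * θ
        = (((L : ℝ) - n * lam) * r₁ + ((M : ℝ) - n * mu) * r₂ - ((N : ℝ) - n * nu)) * θ
          + (L * (ω₁ - r₁ * θ) + M * (ω₂ - r₂ * θ)) := by
      rw [← hsad]; ring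
    rw [e]
    have a1 : |((L : ℝ) - n * lam) * r₁ + ((M : ℝ) - n * mu) * r₂ - ((N : ℝ) - n * nu)|
        ≤ D * (|r₁| + |r₂| + 1) := by
      refine (abs_sub _ _).trans ((add_le_add_left (abs_add_le _ _) _).trans ?_)
      rw [abs_mul, abs_mul]
      nlinarith [mul_le_mul_of_nonneg_right hL (abs_nonneg r₁),
        mul_le_mul_of_nonneg_right hM (abs_nonneg r₂)]
    have a2 : |(L : ℝ) * (ω₁ - r₁ * θ) + M * (ω₂ - r₂ * θ)|
        ≤ ((lam + D) * C₁ + (mu + D) * C₂) * (n * |θ| ^ 3) := by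
      refine (abs_add_le _ _).trans ?_
      rw [abs_mul, abs_mul, Nat.abs_cast, Nat.abs_cast]
      calc _ ≤ (lam + D) * n * (C₁ * |θ| ^ 3) + (mu + D) * n * (C₂ * |θ| ^ 3) := by gcongr
        _ = _ := by ring
    have p1 : 0 ≤ |θ| := abs_nonneg θ
    have p2 : 0 ≤ (n : ℝ) * |θ| ^ 3 := by positivity
    have p3 : 0 ≤ D * (|r₁| + |r₂| + 1) := by positivity
    have p4 : 0 ≤ (lam + D) * C₁ + (mu + D) * C₂ := by positivity
    refine (abs_add_le _ _).trans ?_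
    rw [abs_mul]
    nlinarith [mul_le_mul_of_nonneg_right a1 p1, mul_nonneg p3 p2, mul_nonneg p4 p1]

set_option maxHeartbeats 400000 in
/-- Near the saddle, the modulus of the integrand is `exp (-n κ θ² / 2)` up to an error
`θ² + n θ⁴` in the exponent. -/
theorem integrand_modulus (k₁ k₂ : ℝ) (hk₁ : -1 < k₁) (hk₂ : -1 < k₂) (lam mu D κ : ℝ)
    (hD : 0 ≤ D) (hlam : 0 ≤ lam) (hmu : 0 ≤ mu) (hκ0 : 0 < κ)
    (hκ : lam * (k₁ / (1 + k₁) ^ 2) + mu * (k₂ / (1 + k₂) ^ 2) = κ) :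
    ∃ C : ℝ, 0 ≤ C ∧ ∀ n L M N : ℕ, 1 ≤ n → |(L : ℝ) - n * lam| ≤ D → |(M : ℝ) - n * mu| ≤ D →
      ∀ θ : ℝ, |θ| ≤ 1 → |k₁ / (1 + k₁) ^ 2| * θ ^ 2 ≤ 1 / 2 →
        |k₂ / (1 + k₂) ^ 2| * θ ^ 2 ≤ 1 / 2 → ∃ R : ℝ,
        ‖integrand k₁ k₂ L M N θ‖ = Real.exp R ∧
        |R - -(κ / 2 * (n * θ ^ 2))| ≤ C * (θ ^ 2 + n * θ ^ 4) := by
  set α₁ := k₁ / (1 + k₁) ^ 2 with hα₁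
  set α₂ := k₂ / (1 + k₂) ^ 2 with hα₂
  refine ⟨D * (|α₁| + |α₂|) + (κ + (lam + D) * α₁ ^ 2 + (mu + D) * α₂ ^ 2), by positivity, ?_⟩
  intro n L M N hn hL hM θ hθ hs₁ hs₂
  have hn' : (1 : ℝ) ≤ n := by exact_mod_cast hn
  have hnorm := integrand_norm_sq k₁ k₂ hk₁ hk₂ L M N θ
  have hcb := Real.cos_bound hθ
  have hlb := Real.one_sub_sq_div_two_le_cos (x := θ)
  have hc1 := Real.cos_le_one θ
  rw [← hα₁, ← hα₂] at hnorm
  set τ := 1 - Real.cos θ with hτ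
  have hτ0 : 0 ≤ τ := by linarith
  have hτ1 : τ ≤ θ ^ 2 / 2 := by linarith
  have hτ2 : |τ - θ ^ 2 / 2| ≤ θ ^ 4 := by
    have : |τ - θ ^ 2 / 2| = |Real.cos θ - (1 - θ ^ 2 / 2)| := by
      rw [abs_sub_comm]; congr 1; rw [hτ]; ring
    rw [this]
    refine hcb.trans ?_
    rw [show |θ| ^ 4 = θ ^ 4 by rw [← abs_pow]; exact abs_of_nonneg (by positivity)]
    nlinarith [show 0 ≤ θ ^ 4 by positivity]
  have hx : ∀ α : ℝ, |α| * θ ^ 2 ≤ 1 / 2 → |2 * α * τ| ≤ 1 / 2 := by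
    intro α hα
    rw [abs_mul, abs_mul, abs_of_nonneg hτ0, abs_two]
    nlinarith [mul_le_mul_of_nonneg_left hτ1 (abs_nonneg α)]
  have hx₁ := hx α₁ hs₁
  have hx₂ := hx α₂ hs₂
  have hp₁ : 0 < 1 - 2 * α₁ * τ := by linarith [(abs_le.mp hx₁).2]
  have hp₂ : 0 < 1 - 2 * α₂ * τ := by linarith [(abs_le.mp hx₂).2]
  have hl₁ := abs_log_one_sub_add_le hx₁
  have hl₂ := abs_log_one_sub_add_le hx₂
  refine ⟨(L * Real.log (1 - 2 * α₁ * τ) + M * Real.log (1 - 2 * α₂ * τ)) / 2, ?_, ?_⟩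
  · refine (sq_eq_sq₀ (norm_nonneg _) (Real.exp_pos _).le).mp ?_
    rw [hnorm, ← Real.exp_nat_mul]
    rw [show ((2 : ℕ) : ℝ) * ((L * Real.log (1 - 2 * α₁ * τ) + M * Real.log (1 - 2 * α₂ * τ)) / 2)
      = L * Real.log (1 - 2 * α₁ * τ) + M * Real.log (1 - 2 * α₂ * τ) by push_cast; ring,
      Real.exp_add, Real.exp_nat_mul, Real.exp_nat_mul, Real.exp_log hp₁, Real.exp_log hp₂]
  · have hLn : (L : ℝ) ≤ (lam + D) * n := by nlinarith [(abs_le.mp hL).2]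
    have hMn : (M : ℝ) ≤ (mu + D) * n := by nlinarith [(abs_le.mp hM).2]
    have e : (L * Real.log (1 - 2 * α₁ * τ) + M * Real.log (1 - 2 * α₂ * τ)) / 2
          - -(κ / 2 * (n * θ ^ 2))
        = (L * (Real.log (1 - 2 * α₁ * τ) + 2 * α₁ * τ)
            + M * (Real.log (1 - 2 * α₂ * τ) + 2 * α₂ * τ)) / 2
          + (-(((L : ℝ) - n * lam) * α₁ + ((M : ℝ) - n * mu) * α₂) * τ
          + -(n * κ * (τ - θ ^ 2 / 2))) := by
      rw [← hκ]; ring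
    have hτsq : τ ^ 2 ≤ θ ^ 4 / 4 :=
      (pow_le_pow_left₀ hτ0 hτ1 2).trans (le_of_eq (by ring))
    have b : ∀ α : ℝ, 2 * (2 * α * τ) ^ 2 ≤ 2 * (α ^ 2 * θ ^ 4) := by
      intro α; linarith [mul_le_mul_of_nonneg_left hτsq (sq_nonneg α)]
    have a1 : |(L * (Real.log (1 - 2 * α₁ * τ) + 2 * α₁ * τ)
            + M * (Real.log (1 - 2 * α₂ * τ) + 2 * α₂ * τ)) / 2|
        ≤ ((lam + D) * α₁ ^ 2 + (mu + D) * α₂ ^ 2) * (n * θ ^ 4) := by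
      rw [abs_div, abs_two, div_le_iff₀ two_pos]
      refine (abs_add_le _ _).trans ?_
      rw [abs_mul, abs_mul, Nat.abs_cast, Nat.abs_cast]
      calc _ ≤ (lam + D) * n * (2 * (α₁ ^ 2 * θ ^ 4)) + (mu + D) * n * (2 * (α₂ ^ 2 * θ ^ 4)) := by
            gcongr
            · exact hl₁.trans (b α₁)
            · exact hl₂.trans (b α₂)
        _ = _ := by ring
    have a2 : |-(((L : ℝ) - n * lam) * α₁ + ((M : ℝ) - n * mu) * α₂) * τ|
        ≤ D * (|α₁| + |α₂|) * θ ^ 2 := by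
      rw [abs_mul, abs_neg, abs_of_nonneg hτ0]
      have : |((L : ℝ) - n * lam) * α₁ + ((M : ℝ) - n * mu) * α₂| ≤ D * (|α₁| + |α₂|) := by
        refine (abs_add_le _ _).trans ?_
        rw [abs_mul, abs_mul, mul_add]
        exact add_le_add (mul_le_mul_of_nonneg_right hL (abs_nonneg _))
          (mul_le_mul_of_nonneg_right hM (abs_nonneg _))
      exact mul_le_mul this (by linarith [sq_nonneg θ]) hτ0 (by positivity)
    have a3 : |-(n * κ * (τ - θ ^ 2 / 2))| ≤ κ * (n * θ ^ 4) := by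
      rw [abs_neg, abs_mul, abs_of_nonneg (by positivity : 0 ≤ n * κ)]
      calc _ ≤ n * κ * θ ^ 4 := by gcongr
        _ = _ := by ring
    rw [e]
    refine (abs_add_le _ _).trans ((add_le_add_right (abs_add_le _ _) _).trans ?_)
    have p1 : 0 ≤ D * (|α₁| + |α₂|) * (n * θ ^ 4) := by positivity
    have p2 : 0 ≤ (κ + (lam + D) * α₁ ^ 2 + (mu + D) * α₂ ^ 2) * θ ^ 2 := by positivity
    linarith

/-! ### The method of Laplace -/

set_option maxHeartbeats 800000 in
/-- The integrand, extended by zero off `[-π, π]`, differs from a Gaussian by at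
most `O(1/n)` times a wider Gaussian. -/
theorem integrand_pointwise (k₁ k₂ : ℝ) (hk₁ : -1 < k₁) (hk₂ : -1 < k₂) (lam mu nu D κ : ℝ)
    (hD : 0 ≤ D) (hlam : 0 ≤ lam) (hmu : 0 ≤ mu) (hκ0 : 0 < κ)
    (hsad : lam * (k₁ / (1 + k₁)) + mu * (k₂ / (1 + k₂)) = nu)
    (hκ : lam * (k₁ / (1 + k₁) ^ 2) + mu * (k₂ / (1 + k₂) ^ 2) = κ) :
    ∃ (C c : ℝ) (n₀ : ℕ), 0 < C ∧ 0 < c ∧ ∀ n L M N : ℕ, n₀ ≤ n → 1 ≤ n →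
      |(L : ℝ) - n * lam| ≤ D → |(M : ℝ) - n * mu| ≤ D → |(N : ℝ) - n * nu| ≤ D → ∀ θ : ℝ,
        |(Set.Icc (-Real.pi) Real.pi).indicator (fun t => (integrand k₁ k₂ L M N t).re) θ
            - Real.exp (-(κ / 2 * (n * θ ^ 2)))|
          ≤ C / n * Real.exp (-(c * (n * θ ^ 2))) := by
  obtain ⟨C₁, hC₁, hph⟩ := integrand_phase k₁ k₂ hk₁ hk₂ lam mu nu D hD hlam hmu hsad
  obtain ⟨C₂, hC₂, hmo⟩ := integrand_modulus k₁ k₂ hk₁ hk₂ lam mu D κ hD hlam hmu hκ0 hκ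
  have hpi := Real.pi_gt_three
  set c : ℝ := κ / Real.pi ^ 2 / 2 with hc
  have hc0 : 0 < c := by positivity
  have h2c : κ / Real.pi ^ 2 = 2 * c := by rw [hc]; ring
  have h2cκ : 2 * c ≤ κ / 2 := by
    rw [← h2c]
    exact div_le_div_of_nonneg_left hκ0.le two_pos (by nlinarith)
  obtain ⟨C₃, hC₃, hpoly⟩ := cubic_mul_exp_le c hc0
  set α₁ := k₁ / (1 + k₁) ^ 2 with hα₁
  set α₂ := k₂ / (1 + k₂) ^ 2 with hα₂
  set ε : ℝ := 1 / (2 * (1 + |α₁| + |α₂|)) with hε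
  have hε0 : 0 < ε := by positivity
  have hε1 : ε ≤ 1 / 2 := by
    rw [hε]
    apply one_div_le_one_div_of_le two_pos
    linarith [abs_nonneg α₁, abs_nonneg α₂]
  have hεα : (1 + |α₁| + |α₂|) * ε = 1 / 2 := by rw [hε]; field_simp
  obtain ⟨n₀, hn₀⟩ := exists_nat_ge (2 * (D * (|α₁| + |α₂|)) / κ)
  set K : ℝ := C₁ ^ 2 + C₂ + 2 / ε ^ 2 with hK
  have hK0 : 0 < K := by positivity
  refine ⟨K * C₃, c, n₀, by positivity, hc0, ?_⟩
  intro n L M N hn hn1 hL hM hN θ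
  have hn' : (1 : ℝ) ≤ n := by exact_mod_cast hn1
  have hnpos : (0 : ℝ) < n := by linarith
  set t : ℝ := n * θ ^ 2 with ht
  have ht0 : 0 ≤ t := by positivity
  have hgauss : Real.exp (-(κ / 2 * t)) ≤ Real.exp (-(2 * c * t)) := by
    rw [Real.exp_le_exp]; nlinarith
  -- It suffices to dominate by a cubic polynomial in `t = n θ²` times a Gaussian.
  suffices hmain : |(Set.Icc (-Real.pi) Real.pi).indicator
      (fun t => (integrand k₁ k₂ L M N t).re) θ - Real.exp (-(κ / 2 * t))|
        ≤ K / n * (t + t ^ 2 + t ^ 3) * Real.exp (-(2 * c * t)) by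
    refine hmain.trans ?_
    rw [mul_assoc]
    calc _ ≤ K / n * (C₃ * Real.exp (-(c * t))) := by
          exact mul_le_mul_of_nonneg_left (hpoly t ht0) (by positivity)
      _ = _ := by ring
  have hfar : ε ≤ |θ| → 2 * Real.exp (-(2 * c * t))
      ≤ K / n * (t + t ^ 2 + t ^ 3) * Real.exp (-(2 * c * t)) := by
    intro h
    refine mul_le_mul_of_nonneg_right ?_ (Real.exp_pos _).le
    have h1 : ε ^ 2 ≤ θ ^ 2 := by rw [← sq_abs θ]; gcongr
    calc (2 : ℝ) = 2 / ε ^ 2 / n * (n * ε ^ 2) := by field_simp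
      _ ≤ K / n * (t + t ^ 2 + t ^ 3) := by
        have : (0 : ℝ) ≤ t ^ 2 + t ^ 3 := by positivity
        have h3 : n * ε ^ 2 ≤ t := by rw [ht]; gcongr
        have h4 : 2 / ε ^ 2 ≤ K := by rw [hK]; nlinarith [sq_nonneg C₁]
        gcongr
        linarith
  by_cases hθπ : θ ∈ Set.Icc (-Real.pi) Real.pi
  · rw [Set.indicator_of_mem hθπ]
    have hθ : |θ| ≤ Real.pi := abs_le.mpr hθπ
    have hΛ : n * κ / 2 ≤ α₁ * L + α₂ * M := by
      have h1 : 2 * (D * (|α₁| + |α₂|)) ≤ n * κ := by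
        rw [div_le_iff₀ hκ0] at hn₀
        refine hn₀.trans ?_
        gcongr
      have h2 : |α₁ * ((L : ℝ) - n * lam)| ≤ |α₁| * D := by rw [abs_mul]; gcongr
      have h3 : |α₂ * ((M : ℝ) - n * mu)| ≤ |α₂| * D := by rw [abs_mul]; gcongr
      have e : α₁ * L + α₂ * M = n * κ + α₁ * ((L : ℝ) - n * lam) + α₂ * ((M : ℝ) - n * mu) := by
        rw [← hκ]; ring
      rw [e]
      linarith [(abs_le.mp h2).1, (abs_le.mp h3).1]
    have hnorm := integrand_norm_le k₁ k₂ hk₁ hk₂ L M N κ n hΛ hκ0 θ hθ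
    rw [h2c] at hnorm
    rcases le_or_gt ε |θ| with h | h
    · refine le_trans ?_ (hfar h)
      refine (abs_sub _ _).trans ?_
      rw [abs_of_pos (Real.exp_pos _)]
      linarith [Complex.abs_re_le_norm (integrand k₁ k₂ L M N θ)]
    · have hθ1 : |θ| ≤ 1 := by linarith
      have hsq : θ ^ 2 ≤ ε := by
        rw [← sq_abs θ, sq]
        calc |θ| * |θ| ≤ 1 * ε := mul_le_mul hθ1 h.le (abs_nonneg θ) zero_le_one
          _ = ε := one_mul ε
      obtain ⟨Ω, hΩ, hΩb⟩ := hph n L M N hn1 hL hM hN θ hθ1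
      obtain ⟨R, hR, hRb⟩ := hmo n L M N hn1 hL hM θ hθ1
        (by
          rw [← hεα]
          exact mul_le_mul (by linarith [abs_nonneg α₂]) hsq (sq_nonneg θ) (by positivity))
        (by
          rw [← hεα]
          exact mul_le_mul (by linarith [abs_nonneg α₁]) hsq (sq_nonneg θ) (by positivity))
      have hRle : R ≤ -(2 * c * t) := by
        rw [← Real.exp_le_exp, ← hR]; exact hnorm
      have hGle : -(κ / 2 * t) ≤ -(2 * c * t) := by nlinarith
      have d1 := abs_exp_sub_exp_le hRle hGle
      have hcosb : |Real.cos Ω - 1| ≤ Ω ^ 2 / 2 := by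
        rw [abs_sub_comm, abs_of_nonneg (by linarith [Real.cos_le_one Ω])]
        linarith [Real.one_sub_sq_div_two_le_cos (x := Ω)]
      have hΩ2 : Ω ^ 2 ≤ C₁ ^ 2 * (2 * (θ ^ 2 + n ^ 2 * θ ^ 6)) := by
        rw [← sq_abs Ω]
        calc |Ω| ^ 2 ≤ (C₁ * (|θ| + n * |θ| ^ 3)) ^ 2 := by gcongr
          _ = C₁ ^ 2 * (|θ| + n * |θ| ^ 3) ^ 2 := by ring
          _ ≤ C₁ ^ 2 * (2 * (|θ| ^ 2 + (n * |θ| ^ 3) ^ 2)) := by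
            gcongr; exact add_sq_le
          _ = _ := by
            rw [mul_pow, ← pow_mul, sq_abs, Even.pow_abs (by decide)]
      have hsplit : (integrand k₁ k₂ L M N θ).re - Real.exp (-(κ / 2 * t))
          = Real.exp R * (Real.cos Ω - 1) + (Real.exp R - Real.exp (-(κ / 2 * t))) := by
        rw [hΩ, hR]; ring
      have hnt : θ ^ 2 = t / n := by rw [ht]; field_simp
      rw [hsplit]
      refine (abs_add_le _ _).trans ?_
      rw [abs_mul, abs_of_pos (Real.exp_pos R)]
      calc Real.exp R * |Real.cos Ω - 1| + |Real.exp R - Real.exp (-(κ / 2 * t))|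
          ≤ Real.exp (-(2 * c * t)) * (Ω ^ 2 / 2)
            + Real.exp (-(2 * c * t)) * (C₂ * (θ ^ 2 + n * θ ^ 4)) := by
            gcongr
            exact d1.trans (mul_le_mul_of_nonneg_left hRb (Real.exp_pos _).le)
        _ ≤ Real.exp (-(2 * c * t)) * (C₁ ^ 2 * (θ ^ 2 + n ^ 2 * θ ^ 6)
              + C₂ * (θ ^ 2 + n * θ ^ 4)) := by
            rw [← mul_add]
            gcongr
            linarith
        _ = Real.exp (-(2 * c * t)) * (C₁ ^ 2 * (t + t ^ 3) + C₂ * (t + t ^ 2)) / n := by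
            rw [show θ ^ 6 = (θ ^ 2) ^ 3 by ring, show θ ^ 4 = (θ ^ 2) ^ 2 by ring, hnt]
            field_simp
        _ ≤ Real.exp (-(2 * c * t)) * (K * (t + t ^ 2 + t ^ 3)) / n := by
            have q1 : 0 ≤ C₁ ^ 2 * t ^ 2 := by positivity
            have q2 : 0 ≤ C₂ * t ^ 3 := by positivity
            have q3 : 0 ≤ 2 / ε ^ 2 * (t + t ^ 2 + t ^ 3) := by positivity
            gcongr
            rw [hK]
            linarith
        _ = _ := by ring
  · rw [Set.indicator_of_notMem hθπ, zero_sub, abs_neg, abs_of_pos (Real.exp_pos _)]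
    have hθ : Real.pi < |θ| := by
      by_contra h
      exact hθπ (abs_le.mp (not_lt.mp h))
    linarith [hfar (by linarith), Real.exp_pos (-(2 * c * t))]

/-- The method of Laplace with relative error `O(1/n)`, uniformly over exponents within bounded distance
of `n lam`, `n mu`, `n nu`. -/
theorem laplace (k₁ k₂ : ℝ) (hk₁ : -1 < k₁) (hk₂ : -1 < k₂) (lam mu nu D κ : ℝ)
    (hD : 0 ≤ D) (hlam : 0 ≤ lam) (hmu : 0 ≤ mu) (hκ0 : 0 < κ)
    (hsad : lam * (k₁ / (1 + k₁)) + mu * (k₂ / (1 + k₂)) = nu)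
    (hκ : lam * (k₁ / (1 + k₁) ^ 2) + mu * (k₂ / (1 + k₂) ^ 2) = κ) :
    ∃ (C : ℝ) (n₀ : ℕ), 0 ≤ C ∧ ∀ n L M N : ℕ, n₀ ≤ n → 1 ≤ n →
      |(L : ℝ) - n * lam| ≤ D → |(M : ℝ) - n * mu| ≤ D → |(N : ℝ) - n * nu| ≤ D → ∃ e : ℝ,
        |e| ≤ C / n ∧ ∫ θ in -Real.pi..Real.pi, (integrand k₁ k₂ L M N θ).re
          = Real.sqrt (2 * Real.pi / (n * κ)) * (1 + e) := by
  obtain ⟨C, c, n₀, hC, hc, h⟩ :=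
    integrand_pointwise k₁ k₂ hk₁ hk₂ lam mu nu D κ hD hlam hmu hκ0 hsad hκ
  refine ⟨C * Real.sqrt (κ / (2 * c)), n₀, by positivity, ?_⟩
  intro n L M N hn hn1 hL hM hN
  have hnpos : (0 : ℝ) < n := by exact_mod_cast hn1
  have hpt := h n L M N hn hn1 hL hM hN
  set g : ℝ → ℝ :=
    (Set.Icc (-Real.pi) Real.pi).indicator (fun t => (integrand k₁ k₂ L M N t).re) with hg
  have hcont : Continuous fun t => (integrand k₁ k₂ L M N t).re :=
    Complex.continuous_re.comp (continuous_integrand k₁ k₂ L M N)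
  have hgi : Integrable g :=
    (integrable_indicator_iff measurableSet_Icc).mpr (hcont.continuousOn.integrableOn_Icc)
  have hI : ∫ θ in -Real.pi..Real.pi, (integrand k₁ k₂ L M N θ).re = ∫ θ, g θ := by
    rw [intervalIntegral.integral_of_le (by linarith [Real.pi_pos]),
      ← integral_Icc_eq_integral_Ioc, ← integral_indicator measurableSet_Icc]
  have eG : ∀ d : ℝ, (fun θ : ℝ => Real.exp (-(d * (n * θ ^ 2))))
      = fun θ : ℝ => Real.exp (-(d * n) * θ ^ 2) := by
    intro d; funext θ; congr 1; ring
  have hGi : ∀ d : ℝ, 0 < d → Integrable fun θ : ℝ => Real.exp (-(d * (n * θ ^ 2))) := by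
    intro d hd
    rw [eG]
    exact integrable_exp_neg_mul_sq (by positivity)
  have hGv : ∀ d : ℝ, ∫ θ : ℝ, Real.exp (-(d * (n * θ ^ 2))) = Real.sqrt (Real.pi / (d * n)) := by
    intro d
    rw [eG]
    exact integral_gaussian _
  set S := Real.sqrt (2 * Real.pi / (n * κ)) with hS
  have hSpos : 0 < S := Real.sqrt_pos.mpr (by positivity)
  have hmainv : ∫ θ : ℝ, Real.exp (-(κ / 2 * (n * θ ^ 2))) = S := by
    rw [hGv, hS]; congr 1; field_simp
  have hdomv : ∫ θ : ℝ, C / n * Real.exp (-(c * (n * θ ^ 2)))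
      = C / n * (Real.sqrt (κ / (2 * c)) * S) := by
    rw [integral_const_mul, hGv, hS, ← Real.sqrt_mul (by positivity)]
    congr 2
    field_simp
  have hdiff : |(∫ θ, g θ) - S| ≤ C / n * (Real.sqrt (κ / (2 * c)) * S) := by
    rw [← hmainv, ← integral_sub hgi (hGi _ (by positivity)), hmainv, ← hdomv]
    refine (abs_integral_le_integral_abs).trans ?_
    exact integral_mono (hgi.sub (hGi _ (by positivity))).abs ((hGi c hc).const_mul _) hpt
  refine ⟨((∫ θ, g θ) - S) / S, ?_, ?_⟩
  · rw [abs_div, abs_of_pos hSpos, div_le_iff₀ hSpos]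
    refine hdiff.trans (le_of_eq ?_)
    ring
  · rw [hI]
    field_simp
    ring

/-- Saddle point asymptotics of `krw` when `-ρ` is a critical point of
`(1 - s X) ^ lam * (1 + X) ^ mu / X ^ mu`. The estimate is uniform over exponents within bounded
distance of `n lam`, `n mu`, `n mu`. -/
theorem krw_asymptotic (s ρ : ℝ) (hs : 0 < s) (hρ : 0 < ρ) (hρ1 : ρ < 1) (lam mu D κ : ℝ)
    (hD : 0 ≤ D) (hlam : 0 ≤ lam) (hmu : 0 ≤ mu) (hκ0 : 0 < κ)
    (hsad : lam * (s * ρ / (1 + s * ρ)) - mu * (ρ / (1 - ρ)) = mu)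
    (hκ : lam * (s * ρ / (1 + s * ρ) ^ 2) - mu * (ρ / (1 - ρ) ^ 2) = κ) :
    ∃ (C : ℝ) (n₀ : ℕ), 0 ≤ C ∧ ∀ n L M N : ℕ, n₀ ≤ n → 1 ≤ n →
      |(L : ℝ) - n * lam| ≤ D → |(M : ℝ) - n * mu| ≤ D → |(N : ℝ) - n * mu| ≤ D → ∃ e : ℝ,
        |e| ≤ C / n ∧ krw s L M N * (-ρ) ^ N
          = (1 + s * ρ) ^ L * (1 - ρ) ^ M *
            (Real.sqrt (2 * Real.pi / (n * κ)) / (2 * Real.pi)) * (1 + e) := by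
  obtain ⟨C, n₀, hC, h⟩ := laplace (s * ρ) (-ρ) (by nlinarith) (by linarith) lam mu mu D κ hD hlam
    hmu hκ0 (by rw [← sub_eq_add_neg]; linear_combination hsad)
    (by rw [← sub_eq_add_neg]; linear_combination hκ)
  refine ⟨C, n₀, hC, fun n L M N hn hn1 hL hM hN => ?_⟩
  obtain ⟨e, he, hI⟩ := h n L M N hn hn1 hL hM hN
  refine ⟨e, he, ?_⟩
  have hk := krw_eq_integral s ρ hs hρ hρ1 L M N
  rw [hI] at hk
  have hpi := Real.pi_pos
  field_simp
  linear_combination hk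

/-! ### The saddle point and the transition probability -/

/-- The saddle point `ρ` on the negative real axis, in terms of `r = |a|`, `B = |b|` and
`q = √(ξ² - |a|²)`: positivity, the two affine factors, the saddle equation, and the curvature. -/
theorem saddle_algebra {r B ξ q : ℝ} (hr : 0 < r) (hB : 0 < B) (hq : 0 < q) (hξ : 0 < ξ)
    (hξ1 : ξ < 1) (hrB : r ^ 2 + B ^ 2 = 1) (hq2 : q ^ 2 = ξ ^ 2 - r ^ 2) {s ρ : ℝ}
    (hs : s = B ^ 2 / r ^ 2) (hρ : ρ = (B * ξ - q) / (B * (1 + ξ))) :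
    0 < ρ ∧ ρ < 1 ∧ 1 - ρ = (B + q) / (B * (1 + ξ)) ∧ 1 + s * ρ = (B + q) / (B * ξ + q) ∧
      ρ = r ^ 2 * (1 - ξ) / (B * (B * ξ + q)) ∧
      (1 + ξ) / 2 * (s * ρ / (1 + s * ρ)) - (1 - ξ) / 2 * (ρ / (1 - ρ)) = (1 - ξ) / 2 ∧
      (1 + ξ) / 2 * (s * ρ / (1 + s * ρ) ^ 2) - (1 - ξ) / 2 * (ρ / (1 - ρ) ^ 2)
        = (1 - ξ ^ 2) * q * B / (B + q) ^ 2 := by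
  have hξp : 0 < 1 + ξ := by linarith
  have hξm : 0 < 1 - ξ := by linarith
  have hBq : 0 < B + q := by positivity
  have hBξq : 0 < B * ξ + q := by positivity
  have hprod : (B * ξ - q) * (B * ξ + q) = r ^ 2 * (1 - ξ ^ 2) := by
    linear_combination ξ ^ 2 * hrB - hq2
  have hρ' : ρ = r ^ 2 * (1 - ξ) / (B * (B * ξ + q)) := by
    rw [hρ, div_eq_div_iff (by positivity) (by positivity)]
    linear_combination B * hprod
  have hρ0 : 0 < ρ := by rw [hρ']; positivity
  have h1ρ : 1 - ρ = (B + q) / (B * (1 + ξ)) := by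
    rw [hρ]; field_simp; ring
  have hsρ : s * ρ = B * (1 - ξ) / (B * ξ + q) := by
    rw [hρ', hs]; field_simp
  have h1s : 1 + s * ρ = (B + q) / (B * ξ + q) := by
    rw [hsρ]; field_simp; ring
  have hρ1 : ρ < 1 := by
    have : 0 < 1 - ρ := by rw [h1ρ]; positivity
    linarith
  refine ⟨hρ0, hρ1, h1ρ, h1s, hρ', ?_, ?_⟩
  · rw [h1s, hsρ, h1ρ, hρ]; field_simp; ring
  · rw [h1s, hsρ, h1ρ, hρ]; field_simp; ring

/-- Squared norms of small perturbations. -/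
theorem abs_norm_add_sq_sub_le (w ε : ℂ) : |‖w + ε‖ ^ 2 - ‖w‖ ^ 2| ≤ ‖ε‖ * (2 * ‖w‖ + ‖ε‖) := by
  have h1 : |‖w + ε‖ - ‖w‖| ≤ ‖ε‖ := by
    simpa using abs_norm_sub_norm_le (w + ε) w
  have h2 : ‖w + ε‖ + ‖w‖ ≤ 2 * ‖w‖ + ‖ε‖ := by linarith [norm_add_le w ε]
  rw [sq_sub_sq, abs_mul, mul_comm, abs_of_nonneg (by positivity : 0 ≤ ‖w + ε‖ + ‖w‖)]
  exact mul_le_mul h1 h2 (by positivity) (by positivity)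

/-- The two coefficients in `krwT` combine, at the saddle point, to a perturbation of
`p + q (-ρ)`. -/
theorem krwT_norm_sq {s ρ : ℝ} (hρ : 0 < ρ) (p q : ℂ) (L M N : ℕ) (A e₁ e₂ : ℝ)
    (h₁ : krw s L M (N + 1) * (-ρ) ^ (N + 1) = A * (1 + e₁))
    (h₂ : krw s L M N * (-ρ) ^ N = A * (1 + e₂)) :
    ‖krwT s p q L M (N + 1)‖ ^ 2
      = (A / ρ ^ (N + 1)) ^ 2 * ‖(p - q * ρ) + (p * e₁ - q * ρ * e₂)‖ ^ 2 := by
  have hne : ((-ρ : ℝ) : ℂ) ^ (N + 1) ≠ 0 := by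
    apply pow_ne_zero
    exact_mod_cast (neg_ne_zero.mpr hρ.ne')
  have h₁c : (krw s L M (N + 1) : ℂ) * ((-ρ : ℝ) : ℂ) ^ (N + 1) = A * (1 + e₁) := by
    exact_mod_cast h₁
  have h₂c : (krw s L M N : ℂ) * ((-ρ : ℝ) : ℂ) ^ N = A * (1 + e₂) := by
    exact_mod_cast h₂
  have key : krwT s p q L M (N + 1) * ((-ρ : ℝ) : ℂ) ^ (N + 1)
      = A * ((p - q * ρ) + (p * e₁ - q * ρ * e₂)) := by
    rw [krwT_succ, add_mul, mul_assoc, h₁c, mul_assoc, pow_succ, ← mul_assoc (krw s L M N : ℂ), h₂c]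
    push_cast
    ring
  have hn := congrArg (fun z : ℂ => ‖z‖ ^ 2) key
  simp only [norm_mul, norm_pow, Complex.norm_real, norm_neg, Real.norm_eq_abs, mul_pow, sq_abs,
    abs_of_pos hρ] at hn
  rw [div_pow, div_mul_eq_mul_div, eq_div_iff (by positivity)]
  exact hn

/-- Asymptotics of the transition probability at a site of the right parity, in terms of the
saddle point. Here `l + 1` and `m + 1` are the numbers of steps to the right and to the left. -/
theorem qwP_even (a b : ℂ) (ha : a ≠ 0) (φ : ℂ × ℂ) (s ρ lam mu D κ : ℝ) (hs0 : 0 < s)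
    (hs : s = ‖b‖ ^ 2 / ‖a‖ ^ 2) (hρ : 0 < ρ) (hρ1 : ρ < 1) (hD : 0 ≤ D) (hlam : 0 ≤ lam)
    (hmu : 0 ≤ mu) (hκ0 : 0 < κ)
    (hsad : lam * (s * ρ / (1 + s * ρ)) - mu * (ρ / (1 - ρ)) = mu)
    (hκ : lam * (s * ρ / (1 + s * ρ) ^ 2) - mu * (ρ / (1 - ρ) ^ 2) = κ) :
    ∃ (C : ℝ) (n₀ : ℕ), 0 ≤ C ∧ ∀ n l m : ℕ, n₀ ≤ n → n = l + 1 + (m + 1) →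
      |((l + 1 : ℕ) : ℝ) - n * lam| ≤ D → |((m + 1 : ℕ) : ℝ) - n * mu| ≤ D → ∃ e : ℝ,
        |e| ≤ C / n ∧ qwP a b φ n (((l + 1 : ℕ) : ℤ) - ((m + 1 : ℕ) : ℤ))
          = (‖a‖ ^ n * ((1 + s * ρ) ^ (l + 1) * (1 - ρ) ^ (m + 1) / ρ ^ (m + 1))) ^ 2
              / (2 * Real.pi * n * κ) *
            ((s / (1 + s * ρ) ^ 2 + 1 / (1 - ρ) ^ 2)
              * ‖φ.2 + (starRingEnd ℂ b / a) * φ.1 * ρ‖ ^ 2 + e) := by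
  obtain ⟨C, n₀, hC, h⟩ := krw_asymptotic s ρ hs0 hρ hρ1 lam mu (D + 1) κ (by linarith) hlam hmu
    hκ0 hsad hκ
  have hra : 0 < ‖a‖ := norm_pos_iff.mpr ha
  have hsc : (s : ℂ) * (a * starRingEnd ℂ a) = b * starRingEnd ℂ b := by
    rw [Complex.mul_conj, Complex.mul_conj, Complex.normSq_eq_norm_sq, Complex.normSq_eq_norm_sq, hs]
    norm_cast
    field_simp
  set q : ℂ := -(starRingEnd ℂ b / a) * φ.1 with hq
  set w : ℂ := φ.2 - q * ρ with hw
  have hw' : φ.2 + (starRingEnd ℂ b / a) * φ.1 * ρ = w := by rw [hw, hq]; ring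
  rw [hw']
  have h1s : 0 < 1 + s * ρ := by positivity
  have h1ρ : 0 < 1 - ρ := by linarith
  set K : ℝ := C * (‖φ.2‖ + ‖q‖ * ρ) with hK
  have hK0 : 0 ≤ K := by positivity
  set α : ℝ := s / (1 + s * ρ) ^ 2 with hα
  set β : ℝ := 1 / (1 - ρ) ^ 2 with hβ
  have hα0 : 0 < α := by positivity
  have hβ0 : 0 < β := by positivity
  refine ⟨(α + β) * (K * (2 * ‖w‖ + K)), n₀, by positivity, ?_⟩
  intro n l m hn hnlm hl hm
  have hn1 : 1 ≤ n := by omega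
  have hn' : (1 : ℝ) ≤ n := by exact_mod_cast hn1
  push_cast at hl hm
  have hl2 := abs_le.mp hl
  have hm2 := abs_le.mp hm
  have bl : |(l : ℝ) - n * lam| ≤ D + 1 := abs_le.mpr ⟨by linarith, by linarith⟩
  have bm : |(m : ℝ) - n * mu| ≤ D + 1 := abs_le.mpr ⟨by linarith, by linarith⟩
  have bl1 : |((l + 1 : ℕ) : ℝ) - n * lam| ≤ D + 1 := by push_cast; linarith
  have bm1 : |((m + 1 : ℕ) : ℝ) - n * mu| ≤ D + 1 := by push_cast; linarith
  obtain ⟨e₁, he₁, k₁⟩ := h n l (m + 1) (m + 1) hn hn1 bl bm1 bm1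
  obtain ⟨e₂, he₂, k₂⟩ := h n l (m + 1) m hn hn1 bl bm1 bm
  obtain ⟨e₃, he₃, k₃⟩ := h n (l + 1) m (m + 1) hn hn1 bl1 bm bm1
  obtain ⟨e₄, he₄, k₄⟩ := h n (l + 1) m m hn hn1 bl1 bm bm
  set σ : ℝ := Real.sqrt (2 * Real.pi / (n * κ)) / (2 * Real.pi) with hσ
  have hσ2 : σ ^ 2 = 1 / (2 * Real.pi * n * κ) := by
    rw [hσ, div_pow, Real.sq_sqrt (by positivity)]
    field_simp
  have v₁ := krwT_norm_sq hρ φ.2 q l (m + 1) m _ e₁ e₂ k₁ k₂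
  have v₂ := krwT_norm_sq hρ φ.2 q (l + 1) m m _ e₃ e₄ k₃ k₄
  have small : ∀ x y : ℝ, |x| ≤ C / n → |y| ≤ C / n →
      |‖w + (φ.2 * x - q * ρ * y)‖ ^ 2 - ‖w‖ ^ 2| ≤ K * (2 * ‖w‖ + K) / n := by
    intro x y hx hy
    have h1 : ‖φ.2 * x - q * ρ * y‖ ≤ K / n := by
      refine (norm_sub_le _ _).trans ?_
      simp only [norm_mul, Complex.norm_real, Real.norm_eq_abs, abs_of_pos hρ]
      calc ‖φ.2‖ * |x| + ‖q‖ * ρ * |y| ≤ ‖φ.2‖ * (C / n) + ‖q‖ * ρ * (C / n) := by gcongr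
        _ = K / n := by rw [hK]; ring
    have h2 : K / n ≤ K := div_le_self hK0 hn'
    refine (abs_norm_add_sq_sub_le _ _).trans ?_
    calc _ ≤ K / n * (2 * ‖w‖ + K) := by
          apply mul_le_mul h1 (by linarith) (by positivity) (by positivity)
      _ = _ := by ring
  have s₁ := small e₁ e₂ he₁ he₂
  have s₂ := small e₃ e₄ he₃ he₄
  refine ⟨α * (‖w + (φ.2 * e₁ - q * ρ * e₂)‖ ^ 2 - ‖w‖ ^ 2)
    + β * (‖w + (φ.2 * e₃ - q * ρ * e₄)‖ ^ 2 - ‖w‖ ^ 2), ?_, ?_⟩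
  · refine (abs_add_le _ _).trans ?_
    rw [abs_mul, abs_mul, abs_of_pos hα0, abs_of_pos hβ0]
    calc _ ≤ α * (K * (2 * ‖w‖ + K) / n) + β * (K * (2 * ‖w‖ + K) / n) := by gcongr
      _ = _ := by ring
  · have f₁ := (amp_formula a b ha φ s hsc _ l (m + 1) rfl).1
    have f₂ := (amp_formula a b ha φ s hsc _ (l + 1) m rfl).2
    have hP : qwP a b φ n (((l + 1 : ℕ) : ℤ) - ((m + 1 : ℕ) : ℤ))
        = ‖(amp a b φ (l + 1) (m + 1)).1‖ ^ 2 + ‖(amp a b φ (l + 1) (m + 1)).2‖ ^ 2 := by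
      rw [hnlm]; rfl
    rw [hP, f₁, f₂]
    simp only [norm_mul, norm_pow, RCLike.norm_conj, mul_pow]
    rw [← hq, v₁, v₂, ← hw]
    have hb2 : ‖b‖ ^ 2 = s * ‖a‖ ^ 2 := by rw [hs]; field_simp
    have hpw : ‖a‖ ^ n = ‖a‖ ^ l * ‖a‖ ^ m * ‖a‖ ^ 2 := by rw [hnlm]; ring
    rw [hb2, hpw, div_eq_mul_one_div _ (2 * Real.pi * n * κ), ← hσ2, hα, hβ]
    field_simp
    ring

/-! ### Taylor expansion of the rate function -/

/-- On `|a| < η < 1` the derivative of the rate function keeps only its logarithmic terms. -/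
theorem hasDerivAt_HQ (a b : ℂ) (ha : 0 < ‖a‖) (hb : 0 < ‖b‖) (hab1 : ‖a‖ ^ 2 + ‖b‖ ^ 2 = 1)
    {η : ℝ} (h1 : ‖a‖ < η) (h2 : η < 1) :
    HasDerivAt (HQ a b) (2 * Real.log (‖b‖ * η + Real.sqrt (η ^ 2 - ‖a‖ ^ 2))
      - Real.log (1 - η ^ 2) - 2 * Real.log ‖a‖) η := by
  have hη : 0 < η := ha.trans h1
  have hpos : 0 < η ^ 2 - ‖a‖ ^ 2 := by nlinarith
  have hm : 0 < 1 - η ^ 2 := by nlinarith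
  have hev : HQ a b =ᶠ[𝓝 η] fun x =>
      2 * x * Real.log (‖b‖ * x + Real.sqrt (x ^ 2 - ‖a‖ ^ 2)) -
        2 * Real.log (‖b‖ + Real.sqrt (x ^ 2 - ‖a‖ ^ 2)) +
        (1 - x) * Real.log (1 - x ^ 2) - 2 * x * Real.log ‖a‖ := by
    filter_upwards [lt_mem_nhds hη] with x hx
    simp only [HQ, abs_of_pos hx]
  refine HasDerivAt.congr_of_eventuallyEq ?_ hev
  have hsq : HasDerivAt (fun x : ℝ => x ^ 2) (2 * η) η := by simpa using hasDerivAt_pow 2 η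
  have hid := hasDerivAt_id' η
  have dq := (hsq.sub_const (‖a‖ ^ 2)).sqrt hpos.ne'
  set q := Real.sqrt (η ^ 2 - ‖a‖ ^ 2) with hq
  have hq0 : 0 < q := Real.sqrt_pos.mpr hpos
  have hq2 : q ^ 2 = η ^ 2 - ‖a‖ ^ 2 := Real.sq_sqrt hpos.le
  have dA := ((hid.const_mul ‖b‖).add dq).log
    (by change ‖b‖ * η + q ≠ 0; positivity)
  have dB := (dq.const_add ‖b‖).log (by change ‖b‖ + q ≠ 0; positivity)
  have dC := (hsq.const_sub 1).log hm.ne'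
  have d := ((((hid.const_mul 2).mul dA).sub (dB.const_mul 2)).add ((hid.const_sub 1).mul dC)).sub
    ((hid.const_mul 2).mul_const (Real.log ‖a‖))
  refine d.congr_deriv ?_
  have e1 : ‖b‖ * η + q ≠ 0 := by positivity
  have e2 : ‖b‖ + q ≠ 0 := by positivity
  have e3 : 1 - η ^ 2 ≠ 0 := hm.ne'
  have e4 : 1 + η ≠ 0 := by positivity
  -- The rational part of the derivative vanishes identically.
  have key : 2 * η * ((‖b‖ * 1 + 2 * η / (2 * q)) / (‖b‖ * η + q))
      - 2 * (2 * η / (2 * q) / (‖b‖ + q)) + (1 - η) * (-(2 * η) / (1 - η ^ 2)) = 0 := by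
    have : (1 - η) * (-(2 * η) / (1 - η ^ 2)) = -(2 * η) / (1 + η) := by
      rw [mul_div_assoc', div_eq_div_iff e3 e4]; ring
    rw [this]
    field_simp
    have hη2 : η ^ 2 = q ^ 2 + 1 - ‖b‖ ^ 2 := by linear_combination -hq2 + hab1
    linear_combination (2 * η * q) * hη2
  simp only [Pi.add_apply]
  rw [← hq]
  linear_combination key

/-- Second-order Taylor bound for a function whose derivative is itself differentiable at `ξ`. -/
theorem taylor_two {F F' : ℝ → ℝ} {ξ d : ℝ} (hF : ∀ᶠ η in 𝓝 ξ, HasDerivAt F (F' η) η)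
    (hF' : HasDerivAt F' d ξ) :
    ∃ K δ : ℝ, 0 ≤ K ∧ 0 < δ ∧ ∀ η, |η - ξ| ≤ δ →
      |F η - F ξ - (η - ξ) * F' ξ| ≤ K * (η - ξ) ^ 2 := by
  obtain ⟨K, hK⟩ := hF'.isBigO_sub.bound
  obtain ⟨δ, hδ, hball⟩ := Metric.eventually_nhds_iff.mp (hF.and hK)
  refine ⟨|K|, δ / 2, abs_nonneg K, by linarith, ?_⟩
  intro η hη
  have hsub : ∀ x ∈ Set.uIcc ξ η, |x - ξ| ≤ |η - ξ| := fun x hx => Set.abs_sub_left_of_mem_uIcc hx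
  have hb : ∀ x ∈ Set.uIcc ξ η, HasDerivAt F (F' x) x ∧ ‖F' x - F' ξ‖ ≤ K * ‖x - ξ‖ := by
    intro x hx
    apply hball
    rw [Real.dist_eq]
    linarith [hsub x hx]
  have hd : ∀ x ∈ Set.uIcc ξ η,
      HasDerivWithinAt (fun x => F x - x * F' ξ) (F' x - 1 * F' ξ) (Set.uIcc ξ η) x :=
    fun x hx => ((hb x hx).1.sub ((hasDerivAt_id' x).mul_const _)).hasDerivWithinAt
  have hbd : ∀ x ∈ Set.uIcc ξ η, ‖F' x - 1 * F' ξ‖ ≤ |K| * |η - ξ| := by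
    intro x hx
    rw [one_mul]
    refine (hb x hx).2.trans ?_
    rw [Real.norm_eq_abs]
    exact mul_le_mul (le_abs_self K) (hsub x hx) (abs_nonneg _) (abs_nonneg _)
  have := (convex_uIcc ξ η).norm_image_sub_le_of_norm_hasDerivWithin_le hd hbd
    Set.left_mem_uIcc Set.right_mem_uIcc
  rw [Real.norm_eq_abs, Real.norm_eq_abs, mul_assoc, abs_mul_abs_self, ← sq] at this
  refine le_trans (le_of_eq ?_) this
  congr 1
  ring

/-- Replacing `n H(y/n)` by its tangent line at `ξ` costs a factor `1 + O(1/n)` after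
exponentiating. -/
theorem exp_tangent {F : ℝ → ℝ} {ξ d K δ D : ℝ} (hK : 0 ≤ K) (hδ : 0 < δ)
    (hT : ∀ η, |η - ξ| ≤ δ → |F η - F ξ - (η - ξ) * d| ≤ K * (η - ξ) ^ 2) :
    ∃ (C : ℝ) (n₀ : ℕ), 0 ≤ C ∧ ∀ n : ℕ, ∀ y : ℝ, n₀ ≤ n → 1 ≤ n → |y - n * ξ| ≤ D → ∃ e : ℝ,
      |e| ≤ C / n ∧
        Real.exp (-(n * F ξ + (y - n * ξ) * d)) = Real.exp (-(n : ℝ) * F (y / n)) * (1 + e) := by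
  obtain ⟨n₁, hn₁⟩ := exists_nat_ge (D / δ)
  obtain ⟨n₂, hn₂⟩ := exists_nat_ge (K * D ^ 2)
  refine ⟨2 * (K * D ^ 2), max n₁ n₂, by positivity, ?_⟩
  intro n y hn hn1 hy
  have hnpos : (0 : ℝ) < n := by exact_mod_cast hn1
  have c1 : (n₁ : ℝ) ≤ n := by exact_mod_cast (le_max_left n₁ n₂).trans hn
  have c2 : (n₂ : ℝ) ≤ n := by exact_mod_cast (le_max_right n₁ n₂).trans hn
  have hyn : y / n - ξ = (y - n * ξ) / n := by field_simp
  have hbd : |y / n - ξ| ≤ D / n := by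
    rw [hyn, abs_div, abs_of_pos hnpos]
    gcongr
  have hDδ : D / n ≤ δ := by
    rw [div_le_iff₀ hnpos]
    rw [div_le_iff₀ hδ] at hn₁
    nlinarith
  have h := hT (y / n) (hbd.trans hDδ)
  set x : ℝ := n * (F (y / n) - F ξ - (y / n - ξ) * d) with hx
  have hxb : |x| ≤ K * D ^ 2 / n := by
    rw [hx, abs_mul, abs_of_pos hnpos]
    calc n * |F (y / n) - F ξ - (y / n - ξ) * d| ≤ n * (K * (D / n) ^ 2) := by
          refine mul_le_mul_of_nonneg_left (h.trans ?_) hnpos.le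
          rw [← sq_abs (y / n - ξ)]
          gcongr
      _ = K * D ^ 2 / n := by field_simp
  have hx1 : |x| ≤ 1 := by
    refine hxb.trans ?_
    rw [div_le_one hnpos]
    linarith
  refine ⟨Real.exp x - 1, ?_, ?_⟩
  · refine (Real.abs_exp_sub_one_le hx1).trans ?_
    rw [mul_div_assoc]
    linarith
  · rw [add_sub_cancel, ← Real.exp_add]
    congr 1
    rw [hx, hyn]
    field_simp
    ring

/-! ### The right half of the hidden region -/

/-- At the saddle point the exponential part of the transition probability is the tangent line of
the rate function at `ξ`, evaluated at `y = l - m`. -/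
theorem base_eq_exp (a b : ℂ) (ha : 0 < ‖a‖) (hb : 0 < ‖b‖) {ξ q s ρ : ℝ} (hq0 : 0 < q)
    (hξ : 0 < ξ) (hξ1 : ξ < 1) (hq : q = Real.sqrt (ξ ^ 2 - ‖a‖ ^ 2)) (hρ0 : 0 < ρ) (hρ1 : ρ < 1)
    (hs0 : 0 < s)
    (h1 : 1 - ρ = (‖b‖ + q) / (‖b‖ * (1 + ξ))) (h2 : 1 + s * ρ = (‖b‖ + q) / (‖b‖ * ξ + q))
    (h3 : ρ = ‖a‖ ^ 2 * (1 - ξ) / (‖b‖ * (‖b‖ * ξ + q))) (n l m : ℕ) (hn : n = l + m) :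
    (‖a‖ ^ n * ((1 + s * ρ) ^ l * (1 - ρ) ^ m / ρ ^ m)) ^ 2
      = Real.exp (-(n * HQ a b ξ + (((l : ℝ) - m) - n * ξ) *
          (2 * Real.log (‖b‖ * ξ + q) - Real.log (1 - ξ ^ 2) - 2 * Real.log ‖a‖))) := by
  have h1ρ : 0 < 1 - ρ := by linarith
  have h1s : 0 < 1 + s * ρ := by positivity
  have hξm : 0 < 1 - ξ := by linarith
  have hξp : 0 < 1 + ξ := by linarith
  have hBq : 0 < ‖b‖ + q := by positivity
  have hBξ : 0 < ‖b‖ * ξ + q := by positivity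
  have L1 : Real.log (1 - ρ) = Real.log (‖b‖ + q) - (Real.log ‖b‖ + Real.log (1 + ξ)) := by
    rw [h1, Real.log_div hBq.ne' (by positivity), Real.log_mul hb.ne' hξp.ne']
  have L2 : Real.log (1 + s * ρ) = Real.log (‖b‖ + q) - Real.log (‖b‖ * ξ + q) := by
    rw [h2, Real.log_div hBq.ne' hBξ.ne']
  have L3 : Real.log ρ = 2 * Real.log ‖a‖ + Real.log (1 - ξ)
      - (Real.log ‖b‖ + Real.log (‖b‖ * ξ + q)) := by
    rw [h3, Real.log_div (by positivity) (by positivity), Real.log_mul (by positivity) hξm.ne',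
      Real.log_mul hb.ne' hBξ.ne', Real.log_pow]
    norm_num
  have L4 : Real.log (1 - ξ ^ 2) = Real.log (1 - ξ) + Real.log (1 + ξ) := by
    rw [← Real.log_mul hξm.ne' hξp.ne']
    congr 1
    ring
  have hpos : 0 < (‖a‖ ^ n * ((1 + s * ρ) ^ l * (1 - ρ) ^ m / ρ ^ m)) ^ 2 := by positivity
  rw [← Real.exp_log hpos]
  congr 1
  rw [Real.log_pow, Real.log_mul (by positivity) (by positivity),
    Real.log_div (by positivity) (by positivity), Real.log_mul (by positivity) (by positivity),
    Real.log_pow, Real.log_pow, Real.log_pow, Real.log_pow, L1, L2, L3, HQ, ← hq, abs_of_pos hξ, L4,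
    hn]
  push_cast
  ring

/-- The amplitude factor `G` on the right half `|a| < η < 1` of the hidden region. -/
def ampFactor (a b : ℂ) (φ : ℂ × ℂ) (η : ℝ) : ℝ :=
  ((‖b‖ * η + Real.sqrt (η ^ 2 - ‖a‖ ^ 2)) ^ 2 / ‖a‖ ^ 2 + (1 + η) ^ 2) / 4 *
    ‖φ.2 + (starRingEnd ℂ b / a) * φ.1 *
      (((‖b‖ * η - Real.sqrt (η ^ 2 - ‖a‖ ^ 2)) / (‖b‖ * (1 + η)) : ℝ) : ℂ)‖ ^ 2

theorem ampFactor_nonneg (a b : ℂ) (φ : ℂ × ℂ) (η : ℝ) : 0 ≤ ampFactor a b φ η := by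
  unfold ampFactor
  positivity

theorem contDiffAt_ampFactor (a b : ℂ) (ha : a ≠ 0) (hb : b ≠ 0) (φ : ℂ × ℂ) {η : ℝ}
    (h : ‖a‖ < η) : ContDiffAt ℝ (⊤ : ℕ∞) (ampFactor a b φ) η := by
  have ha' : 0 < ‖a‖ := norm_pos_iff.mpr ha
  have hb' : 0 < ‖b‖ := norm_pos_iff.mpr hb
  have hη : 0 < η := ha'.trans h
  have hpos : η ^ 2 - ‖a‖ ^ 2 ≠ 0 := by nlinarith
  have hq : ContDiffAt ℝ (⊤ : ℕ∞) (fun η : ℝ => Real.sqrt (η ^ 2 - ‖a‖ ^ 2)) η :=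
    ContDiffAt.sqrt (by fun_prop) hpos
  have hρ : ContDiffAt ℝ (⊤ : ℕ∞) (fun η : ℝ =>
      (‖b‖ * η - Real.sqrt (η ^ 2 - ‖a‖ ^ 2)) / (‖b‖ * (1 + η))) η :=
    ContDiffAt.div (ContDiffAt.sub (by fun_prop) hq) (by fun_prop) (by positivity)
  have hρc : ContDiffAt ℝ (⊤ : ℕ∞) (fun η : ℝ =>
      (((‖b‖ * η - Real.sqrt (η ^ 2 - ‖a‖ ^ 2)) / (‖b‖ * (1 + η)) : ℝ) : ℂ)) η :=
    Complex.ofRealCLM.contDiff.contDiffAt.comp η hρ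
  unfold ampFactor
  refine ContDiffAt.mul ?_ (ContDiffAt.norm_sq ℝ ?_)
  · refine ContDiffAt.div_const (ContDiffAt.add (ContDiffAt.div_const (ContDiffAt.pow ?_ 2) _) ?_) _
    · exact ContDiffAt.add (by fun_prop) hq
    · fun_prop
  · exact contDiffAt_const.add (contDiffAt_const.mul hρc)

set_option maxHeartbeats 800000 in
/-- The asymptotic formula on the right half of the hidden region, uniformly over all sites of the
right parity within bounded distance of `n ξ`. -/
theorem qwP_pos (a b : ℂ) (hab1 : ‖a‖ ^ 2 + ‖b‖ ^ 2 = 1) (ha : a ≠ 0) (hb : b ≠ 0)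
    (φ : ℂ × ℂ) (ξ : ℝ) (h1 : ‖a‖ < ξ) (h2 : ξ < 1) (D : ℝ) (hD : 0 ≤ D) :
    ∃ (C : ℝ) (n₀ : ℕ), 0 ≤ C ∧ 1 ≤ n₀ ∧ ∀ (n : ℕ) (y : ℤ), n₀ ≤ n → |(y : ℝ) - n * ξ| ≤ D →
      Even ((n : ℤ) + y) → ∃ e : ℝ, |e| ≤ C / n ∧
        qwP a b φ n y = 2 * ‖b‖ / (Real.pi * n * (1 - ξ ^ 2) * Real.sqrt (ξ ^ 2 - ‖a‖ ^ 2)) *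
          Real.exp (-(n : ℝ) * HQ a b (y / n)) * (ampFactor a b φ ξ + e) := by
  have ha' : 0 < ‖a‖ := norm_pos_iff.mpr ha
  have hb' : 0 < ‖b‖ := norm_pos_iff.mpr hb
  have hξ : 0 < ξ := ha'.trans h1
  have hpos : 0 < ξ ^ 2 - ‖a‖ ^ 2 := by nlinarith
  have hG : ampFactor a b φ ξ = ((‖b‖ * ξ + Real.sqrt (ξ ^ 2 - ‖a‖ ^ 2)) ^ 2 / ‖a‖ ^ 2
      + (1 + ξ) ^ 2) / 4 * ‖φ.2 + (starRingEnd ℂ b / a) * φ.1 *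
      (((‖b‖ * ξ - Real.sqrt (ξ ^ 2 - ‖a‖ ^ 2)) / (‖b‖ * (1 + ξ)) : ℝ) : ℂ)‖ ^ 2 := rfl
  have hG0 := ampFactor_nonneg a b φ ξ
  set G := ampFactor a b φ ξ with hGdef
  set q := Real.sqrt (ξ ^ 2 - ‖a‖ ^ 2) with hq
  have hq0 : 0 < q := Real.sqrt_pos.mpr hpos
  have hq2 : q ^ 2 = ξ ^ 2 - ‖a‖ ^ 2 := Real.sq_sqrt hpos.le
  set ρ := (‖b‖ * ξ - q) / (‖b‖ * (1 + ξ)) with hρ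
  set s := ‖b‖ ^ 2 / ‖a‖ ^ 2 with hs
  have hs0 : 0 < s := by positivity
  obtain ⟨hρ0, hρ1, e1ρ, e1s, eρ, hsad, hκ⟩ :=
    saddle_algebra ha' hb' hq0 hξ h2 hab1 hq2 hs hρ
  set κ := (1 - ξ ^ 2) * q * ‖b‖ / (‖b‖ + q) ^ 2 with hκdef
  have hm : 0 < 1 - ξ ^ 2 := by nlinarith
  have hκ0 : 0 < κ := by positivity
  obtain ⟨C₂, n₂, hC₂, hev⟩ := qwP_even a b ha φ s ρ ((1 + ξ) / 2) ((1 - ξ) / 2) D κ hs0 hs hρ0 hρ1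
    hD (by linarith) (by linarith) hκ0 hsad hκ
  set d := 2 * Real.log (‖b‖ * ξ + q) - Real.log (1 - ξ ^ 2) - 2 * Real.log ‖a‖ with hd
  have hF : ∀ᶠ η in 𝓝 ξ, HasDerivAt (HQ a b) (2 * Real.log (‖b‖ * η + Real.sqrt (η ^ 2 - ‖a‖ ^ 2))
      - Real.log (1 - η ^ 2) - 2 * Real.log ‖a‖) η := by
    filter_upwards [lt_mem_nhds h1, gt_mem_nhds h2] with η g1 g2
    exact hasDerivAt_HQ a b ha' hb' hab1 g1 g2
  have hF' : DifferentiableAt ℝ (fun η : ℝ => 2 * Real.log (‖b‖ * η + Real.sqrt (η ^ 2 - ‖a‖ ^ 2))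
      - Real.log (1 - η ^ 2) - 2 * Real.log ‖a‖) ξ := by
    have dq : DifferentiableAt ℝ (fun η : ℝ => Real.sqrt (η ^ 2 - ‖a‖ ^ 2)) ξ :=
      DifferentiableAt.sqrt (by fun_prop) hpos.ne'
    refine DifferentiableAt.sub_const (DifferentiableAt.sub
      (DifferentiableAt.const_mul (DifferentiableAt.log (DifferentiableAt.add (by fun_prop) dq) ?_) 2)
      (DifferentiableAt.log (by fun_prop) hm.ne')) _
    change ‖b‖ * ξ + q ≠ 0
    positivity
  obtain ⟨K, δ, hK, hδ, hT⟩ := taylor_two hF hF'.hasDerivAt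
  obtain ⟨C₁, n₁, hC₁, hexp⟩ := exp_tangent (F := HQ a b) (ξ := ξ) (d := d) (D := D) hK hδ hT
  obtain ⟨n₃, hn₃⟩ := exists_nat_ge ((D + 2) / (1 - ξ))
  set c : ℝ := (‖b‖ + q) ^ 2 / (4 * ‖b‖ ^ 2) with hc
  have hc0 : 0 < c := by positivity
  refine ⟨C₁ * G + c * C₂ + c * C₁ * C₂, max (max n₁ n₂) (max n₃ 1), by positivity,
    (le_max_right n₃ 1).trans (le_max_right _ _), ?_⟩
  intro n y hn hy hpar
  have hn1 : 1 ≤ n := le_trans ((le_max_right n₃ 1).trans (le_max_right _ _)) hn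
  have b1 : n₁ ≤ n := le_trans ((le_max_left n₁ n₂).trans (le_max_left _ _)) hn
  have b2 : n₂ ≤ n := le_trans ((le_max_right n₁ n₂).trans (le_max_left _ _)) hn
  have b3 : (n₃ : ℝ) ≤ n := by
    exact_mod_cast le_trans ((le_max_left n₃ 1).trans (le_max_right _ _)) hn
  have hn' : (1 : ℝ) ≤ n := by exact_mod_cast hn1
  have hnpos : (0 : ℝ) < n := by linarith
  have hbig : D + 2 ≤ n * (1 - ξ) := by
    rw [div_le_iff₀ (by linarith)] at hn₃
    exact hn₃.trans (mul_le_mul_of_nonneg_right b3 (by linarith))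
  have hnξ : 0 < n * ξ := mul_pos hnpos hξ
  have hy2 := abs_le.mp hy
  obtain ⟨k, hk⟩ := hpar
  have hkR : (n : ℝ) + y = k + k := by exact_mod_cast hk
  have hk1 : 1 ≤ k := by
    have : (1 : ℝ) ≤ k := by linarith [hy2.1]
    exact_mod_cast this
  have hk2 : k + 1 ≤ n := by
    have : (k : ℝ) + 1 ≤ n := by linarith [hy2.2]
    exact_mod_cast this
  obtain ⟨l, hl⟩ := Int.eq_ofNat_of_zero_le (by omega : 0 ≤ k - 1)
  obtain ⟨m, hm'⟩ := Int.eq_ofNat_of_zero_le (by omega : 0 ≤ (n : ℤ) - k - 1)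
  have hnlm : n = l + 1 + (m + 1) := by omega
  have hylm : y = ((l + 1 : ℕ) : ℤ) - ((m + 1 : ℕ) : ℤ) := by push_cast; omega
  have hyR : (y : ℝ) = ((l + 1 : ℕ) : ℝ) - ((m + 1 : ℕ) : ℝ) := by rw [hylm]; push_cast; ring
  have hnR : (n : ℝ) = ((l + 1 : ℕ) : ℝ) + ((m + 1 : ℕ) : ℝ) := by rw [hnlm]; push_cast; ring
  obtain ⟨e₂, he₂, hP⟩ := hev n l m b2 hnlm
    (abs_le.mpr ⟨by linarith, by linarith⟩) (abs_le.mpr ⟨by linarith, by linarith⟩)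
  obtain ⟨e₁, he₁, hE⟩ := hexp n y b1 hn1 hy
  have hbase := base_eq_exp a b ha' hb' hq0 hξ h2 hq hρ0 hρ1 hs0 e1ρ e1s eρ n (l + 1) (m + 1) hnlm
  rw [← hyR, hE] at hbase
  rw [hbase, ← hylm] at hP
  have hcS : c * (s / (1 + s * ρ) ^ 2 + 1 / (1 - ρ) ^ 2)
      = ((‖b‖ * ξ + q) ^ 2 / ‖a‖ ^ 2 + (1 + ξ) ^ 2) / 4 := by
    rw [e1s, e1ρ, hc, hs]
    have : 0 < ‖b‖ * ξ + q := by positivity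
    field_simp
  have hcG : c * ((s / (1 + s * ρ) ^ 2 + 1 / (1 - ρ) ^ 2)
      * ‖φ.2 + (starRingEnd ℂ b / a) * φ.1 * ρ‖ ^ 2) = G := by
    rw [hG, ← mul_assoc, hcS]
  refine ⟨e₁ * G + c * e₂ + c * e₁ * e₂, ?_, ?_⟩
  · have t1 : |e₁ * G| ≤ C₁ / n * G := by
      rw [abs_mul, abs_of_nonneg hG0]; gcongr
    have t2 : |c * e₂| ≤ c * (C₂ / n) := by
      rw [abs_mul, abs_of_pos hc0]; gcongr
    have t3 : |c * e₁ * e₂| ≤ c * C₁ * (C₂ / n) := by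
      rw [abs_mul, abs_mul, abs_of_pos hc0]
      have : |e₁| ≤ C₁ := he₁.trans (div_le_self hC₁ hn')
      gcongr
    calc _ ≤ |e₁ * G| + |c * e₂| + |c * e₁ * e₂| := abs_add_three _ _ _
      _ ≤ C₁ / n * G + c * (C₂ / n) + c * C₁ * (C₂ / n) := by gcongr
      _ = _ := by ring
  · rw [hP, ← hcG]
    have hpre : 1 / (2 * Real.pi * n * κ) = 2 * ‖b‖ / (Real.pi * n * (1 - ξ ^ 2) * q) * c := by
      rw [hκdef, hc]
      field_simp
      norm_num
    rw [div_eq_mul_one_div _ (2 * Real.pi * n * κ), hpre]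
    ring

/-! ### Reflection and the full hidden region -/

/-- Reflecting space and swapping the two components turns the walk of `(a, b)` into the walk of
`(conj a, -conj b)`. -/
theorem qwIter_reflect (a b : ℂ) (φ : ℂ × ℂ) (n : ℕ) : ∀ x : ℤ,
    (qwStep (starRingEnd ℂ a) (-starRingEnd ℂ b))^[n] (qwDelta φ.swap) (-x)
      = ((qwStep a b)^[n] (qwDelta φ) x).swap := by
  induction n with
  | zero =>
    intro x
    by_cases hx : x = 0
    · simp [qwDelta, hx]
    · simp [qwDelta, hx, neg_eq_zero]
  | succ n ih =>
    intro x
    have h1 := ih (x - 1)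
    have h2 := ih (x + 1)
    rw [show -(x - 1) = -x + 1 by ring] at h1
    rw [show -(x + 1) = -x - 1 by ring] at h2
    rw [Function.iterate_succ_apply', Function.iterate_succ_apply']
    simp only [qwStep] at h1 h2 ⊢
    rw [h1, h2]
    simp [Prod.swap, add_comm]

theorem qwP_reflect (a b : ℂ) (φ : ℂ × ℂ) (n : ℕ) (y : ℤ) :
    qwP (starRingEnd ℂ a) (-starRingEnd ℂ b) φ.swap n (-y) = qwP a b φ n y := by
  rw [qwP, qwIter_reflect, qwP, nsq, nsq, add_comm]
  rfl

theorem HQ_reflect (a b : ℂ) (η : ℝ) :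
    HQ (starRingEnd ℂ a) (-starRingEnd ℂ b) (-η) = HQ a b η := by
  simp [HQ]

/-- The amplitude factor `G` on the whole hidden region; the left half is obtained from the right
half by the reflection symmetry of the walk. -/
def hiddenG (a b : ℂ) (φ : ℂ × ℂ) (η : ℝ) : ℝ :=
  if 0 < η then ampFactor a b φ η
  else ampFactor (starRingEnd ℂ a) (-starRingEnd ℂ b) φ.swap (-η)

theorem hiddenG_nonneg (a b : ℂ) (φ : ℂ × ℂ) (η : ℝ) : 0 ≤ hiddenG a b φ η := by
  unfold hiddenG
  split_ifs <;> exact ampFactor_nonneg _ _ _ _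

theorem contDiffOn_hiddenG (a b : ℂ) (ha : a ≠ 0) (hb : b ≠ 0) (φ : ℂ × ℂ) :
    ContDiffOn ℝ (⊤ : ℕ∞) (hiddenG a b φ) {η : ℝ | ‖a‖ < |η| ∧ |η| < 1} := by
  rintro η ⟨h1, -⟩
  apply ContDiffAt.contDiffWithinAt
  have hη : η ≠ 0 := by
    rintro rfl
    rw [abs_zero] at h1
    exact absurd h1 (not_lt.mpr (norm_nonneg a))
  rcases lt_or_gt_of_ne hη with h | h
  · have hev : hiddenG a b φ =ᶠ[𝓝 η]
        fun x => ampFactor (starRingEnd ℂ a) (-starRingEnd ℂ b) φ.swap (-x) := by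
      filter_upwards [gt_mem_nhds h] with x hx
      rw [hiddenG, if_neg (not_lt.mpr hx.le)]
    refine ContDiffAt.congr_of_eventuallyEq ?_ hev
    refine ContDiffAt.comp η (contDiffAt_ampFactor _ _ (by simpa using ha) (by simpa using hb) _ ?_)
      contDiffAt_id.neg
    rw [abs_of_neg h] at h1
    simpa using h1
  · have hev : hiddenG a b φ =ᶠ[𝓝 η] ampFactor a b φ := by
      filter_upwards [lt_mem_nhds h] with x hx
      rw [hiddenG, if_pos hx]
    rw [abs_of_pos h] at h1
    exact (contDiffAt_ampFactor a b ha hb φ h1).congr_of_eventuallyEq hev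

theorem qwP_hidden (a b : ℂ) (hab1 : ‖a‖ ^ 2 + ‖b‖ ^ 2 = 1) (ha : a ≠ 0) (hb : b ≠ 0)
    (φ : ℂ × ℂ) (ξ : ℝ) (h1 : ‖a‖ < |ξ|) (h2 : |ξ| < 1) (D : ℝ) (hD : 0 ≤ D) :
    ∃ (C : ℝ) (n₀ : ℕ), 0 ≤ C ∧ 1 ≤ n₀ ∧ ∀ (n : ℕ) (y : ℤ), n₀ ≤ n → |(y : ℝ) - n * ξ| ≤ D →
      Even ((n : ℤ) + y) → ∃ e : ℝ, |e| ≤ C / n ∧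
        qwP a b φ n y = 2 * ‖b‖ / (Real.pi * n * (1 - ξ ^ 2) * Real.sqrt (ξ ^ 2 - ‖a‖ ^ 2)) *
          Real.exp (-(n : ℝ) * HQ a b (y / n)) * (hiddenG a b φ ξ + e) := by
  rcases lt_or_ge 0 ξ with h | h
  · rw [abs_of_pos h] at h1 h2
    rw [hiddenG, if_pos h]
    exact qwP_pos a b hab1 ha hb φ ξ h1 h2 D hD
  · rw [abs_of_nonpos h] at h1 h2
    rw [hiddenG, if_neg (not_lt.mpr h)]
    obtain ⟨C, n₀, hC, hn₀, hmain⟩ := qwP_pos (starRingEnd ℂ a) (-starRingEnd ℂ b)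
      (by simpa using hab1) (by simpa using ha) (by simpa using hb) φ.swap (-ξ) (by simpa using h1)
      h2 D hD
    refine ⟨C, n₀, hC, hn₀, fun n y hn hy hpar => ?_⟩
    obtain ⟨e, he, hP⟩ := hmain n (-y) hn
      (by
        rw [← abs_neg] at hy
        convert hy using 2
        push_cast
        ring)
      (by
        rw [Int.even_add, even_neg, ← Int.even_add]
        exact hpar)
    refine ⟨e, he, ?_⟩
    rw [qwP_reflect, Int.cast_neg, neg_div, HQ_reflect] at hP
    simpa only [norm_neg, RCLike.norm_conj, neg_sq] using hP

/-- Theorem `hidden`: large-deviation type asymptotics of `p_n(φ;y_n)` in the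
hidden region `|a| < |ξ| < 1`, `y_n = nξ + O(1)`. -/
theorem stmt3 (a b : ℂ) (hab1 : ‖a‖ ^ 2 + ‖b‖ ^ 2 = 1) (hab : a * b ≠ 0)
    (φ : ℂ × ℂ) (hφ : nsq φ = 1) (ξ : ℝ) (hξ1 : ‖a‖ < |ξ|) (hξ2 : |ξ| < 1)
    (y : ℕ → ℤ) (hy : (fun n : ℕ => (y n : ℝ) - (n : ℝ) * ξ) =O[atTop] fun _ : ℕ => (1 : ℝ)) :
    ∃ G : ℝ → ℝ,
      ContDiffOn ℝ (⊤ : ℕ∞) G {η : ℝ | ‖a‖ < |η| ∧ |η| < 1} ∧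
      (∀ η : ℝ, ‖a‖ < |η| → |η| < 1 → 0 ≤ G η) ∧
      ∃ E : ℕ → ℝ, (E =O[atTop] fun n : ℕ => 1 / (n : ℝ)) ∧
        ∀ n : ℕ, 0 < n →
          qwP a b φ n (y n) =
            (1 + (-1 : ℝ) ^ ((n : ℤ) + y n)) * ‖b‖ /
                (Real.pi * (n : ℝ) * (1 - ξ ^ 2) * Real.sqrt (ξ ^ 2 - ‖a‖ ^ 2)) *
              Real.exp (-(n : ℝ) * HQ a b ((y n : ℝ) / (n : ℝ))) * (G ξ + E n) := by
  have ha : a ≠ 0 := left_ne_zero_of_mul hab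
  have hb : b ≠ 0 := right_ne_zero_of_mul hab
  have hb' : 0 < ‖b‖ := norm_pos_iff.mpr hb
  refine ⟨hiddenG a b φ, contDiffOn_hiddenG a b ha hb φ, fun η _ _ => hiddenG_nonneg a b φ η, ?_⟩
  obtain ⟨D, hDb⟩ := hy.bound
  obtain ⟨C, n₀, hC, hn₀, hmain⟩ :=
    qwP_hidden a b hab1 ha hb φ ξ hξ1 hξ2 |D| (abs_nonneg D)
  have hsq : ‖a‖ ^ 2 < ξ ^ 2 := by
    rw [← sq_abs ξ]
    exact pow_lt_pow_left₀ hξ1 (norm_nonneg a) two_ne_zero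
  have hq0 : 0 < Real.sqrt (ξ ^ 2 - ‖a‖ ^ 2) := Real.sqrt_pos.mpr (by linarith)
  have hm : 0 < 1 - ξ ^ 2 := by
    have : ξ ^ 2 < 1 := (sq_lt_one_iff_abs_lt_one ξ).mpr hξ2
    linarith
  have hpre : ∀ n : ℕ, 0 < n → 0 < 2 * ‖b‖ / (Real.pi * n * (1 - ξ ^ 2) *
      Real.sqrt (ξ ^ 2 - ‖a‖ ^ 2)) * Real.exp (-(n : ℝ) * HQ a b ((y n : ℝ) / n)) := by
    intro n hn
    have : (0 : ℝ) < n := by exact_mod_cast hn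
    positivity
  -- On sites of the wrong parity both sides vanish, so any error term does; elsewhere it is forced.
  refine ⟨fun n => if Even ((n : ℤ) + y n) then
    qwP a b φ n (y n) / (2 * ‖b‖ / (Real.pi * n * (1 - ξ ^ 2) * Real.sqrt (ξ ^ 2 - ‖a‖ ^ 2)) *
      Real.exp (-(n : ℝ) * HQ a b ((y n : ℝ) / n))) - hiddenG a b φ ξ else 0, ?_, ?_⟩
  · refine IsBigO.of_bound C ?_
    filter_upwards [hDb, eventually_ge_atTop n₀] with n hyn hn
    rw [norm_one, mul_one, Real.norm_eq_abs] at hyn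
    rw [Real.norm_eq_abs, Real.norm_eq_abs, abs_of_nonneg (by positivity : (0 : ℝ) ≤ 1 / n),
      mul_one_div]
    split_ifs with hpar
    · obtain ⟨e, he, hP⟩ := hmain n (y n) hn (hyn.trans (le_abs_self D)) hpar
      rw [hP, mul_div_cancel_left₀ _ (hpre n (by omega)).ne', add_sub_cancel_left]
      exact he
    · rw [abs_zero]
      positivity
  · intro n hn
    dsimp only
    split_ifs with hpar
    · rw [hpar.neg_one_zpow, add_sub_cancel, one_add_one_eq_two,
        mul_div_cancel₀ _ (hpre n hn).ne']
    · have hodd : Odd ((n : ℤ) + y n) := Int.not_even_iff_odd.mp hpar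
      rw [hodd.neg_one_zpow, qwP, qwIter_parity a b φ n (y n) hodd]
      simp [nsq]
end
end

section
/- For every unit vector ψ ∈ ℂ², every n ∈ ℕ and every x ∈ ℤ, one has q_n(ψ; x) = p_n(Aψ; x); in particular the row-decomposition walk V and the column-decomposition walk U have identical transition probabilities up to the change of initial spin state ψ ↦ Aψ. (Moreover V A* = A* U as operators on ℓ²(ℤ, ℂ²), where A* acts componentwise.) -/
/-!
Write `T` for the spin-dependent shift `(T f)(x) = (f(x+1).1, f(x-1).2)`. Then `U = A T` and `V = T A`,
so `V A* = T = A* U` because `A` is unitary. Iterating this intertwining relation on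
`δ₀ ⊗ ψ = A* (δ₀ ⊗ Aψ)` gives `Vⁿ (δ₀ ⊗ ψ) = A* Uⁿ (δ₀ ⊗ Aψ)`, and `A*` preserves the norm of the
spin at each site.
-/

open Filter Topology Asymptotics MeasureTheory

noncomputable section

/-- One step of the row-decomposition quantum walk `V`:
`(Vf)(x) = R f(x+1) + S f(x-1)` with `R = [[a,b],[0,0]]`, `S = [[0,0],[−conj b, conj a]]`. -/
def qwStepV (a b : ℂ) (f : ℤ → ℂ × ℂ) : ℤ → ℂ × ℂ := fun x =>
  (a * (f (x + 1)).1 + b * (f (x + 1)).2,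
   -(starRingEnd ℂ) b * (f (x - 1)).1 + (starRingEnd ℂ) a * (f (x - 1)).2)

/-- Transition probability of the walk `V`: `q_n(ψ; x) = ‖(Vⁿ(δ₀ ⊗ ψ))(x)‖²`. -/
def qwQ (a b : ℂ) (ψ : ℂ × ℂ) (n : ℕ) (x : ℤ) : ℝ :=
  nsq (((qwStepV a b)^[n] (qwDelta ψ)) x)

/-- The matrix `A = [[a,b],[−conj b, conj a]]` acting on `ℂ²`. -/
def Amap (a b : ℂ) (u : ℂ × ℂ) : ℂ × ℂ :=
  (a * u.1 + b * u.2, -(starRingEnd ℂ) b * u.1 + (starRingEnd ℂ) a * u.2)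

/-- The adjoint matrix `A* = [[conj a, −b],[conj b, a]]` acting on `ℂ²`. -/
def AstarMap (a b : ℂ) (u : ℂ × ℂ) : ℂ × ℂ :=
  ((starRingEnd ℂ) a * u.1 - b * u.2, (starRingEnd ℂ) b * u.1 + a * u.2)

/-- The condition `|a|² + |b|² = 1` as a polynomial identity over `ℂ`. -/
lemma mul_conj_add_mul_conj_eq_one {a b : ℂ} (hab1 : ‖a‖ ^ 2 + ‖b‖ ^ 2 = 1) :
    a * (starRingEnd ℂ) a + b * (starRingEnd ℂ) b = 1 := by
  rw [Complex.mul_conj', Complex.mul_conj']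
  exact_mod_cast hab1

lemma AstarMap_Amap {a b : ℂ} (hab1 : ‖a‖ ^ 2 + ‖b‖ ^ 2 = 1) (u : ℂ × ℂ) :
    AstarMap a b (Amap a b u) = u := by
  have h := mul_conj_add_mul_conj_eq_one hab1
  ext1
  · simp only [AstarMap, Amap]
    linear_combination u.1 * h
  · simp only [AstarMap, Amap]
    linear_combination u.2 * h

lemma nsq_AstarMap {a b : ℂ} (hab1 : ‖a‖ ^ 2 + ‖b‖ ^ 2 = 1) (u : ℂ × ℂ) :
    nsq (AstarMap a b u) = nsq u := by
  have h := mul_conj_add_mul_conj_eq_one hab1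
  have key : ((nsq (AstarMap a b u) : ℝ) : ℂ) = (nsq u : ℝ) := by
    simp only [nsq, AstarMap, Complex.ofReal_add, Complex.ofReal_pow, ← Complex.mul_conj',
      map_add, map_sub, map_mul, Complex.conj_conj]
    linear_combination (u.1 * (starRingEnd ℂ) u.1 + u.2 * (starRingEnd ℂ) u.2) * h
  exact_mod_cast key

/-- The intertwining relation `V A* = A* U`: both sides are `|a|² + |b|²` times the
shift `x ↦ (f(x+1).1, f(x-1).2)`, so no normalisation of `(a, b)` is needed. -/
lemma qwStepV_AstarMap (a b : ℂ) (f : ℤ → ℂ × ℂ) (x : ℤ) :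
    qwStepV a b (fun z => AstarMap a b (f z)) x = AstarMap a b (qwStep a b f x) := by
  ext1
  · simp only [qwStepV, AstarMap, qwStep]
    ring
  · simp only [qwStepV, AstarMap, qwStep]
    ring

lemma iterate_qwStepV_AstarMap (a b : ℂ) (n : ℕ) (f : ℤ → ℂ × ℂ) :
    (qwStepV a b)^[n] (fun z => AstarMap a b (f z)) =
      fun z => AstarMap a b ((qwStep a b)^[n] f z) := by
  have hsemi : Function.Semiconj (fun (g : ℤ → ℂ × ℂ) z => AstarMap a b (g z))
      (qwStep a b) (qwStepV a b) :=
    fun g => funext fun x => (qwStepV_AstarMap a b g x).symm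
  exact ((hsemi.iterate_right n).eq f).symm

lemma qwDelta_eq_AstarMap {a b : ℂ} (hab1 : ‖a‖ ^ 2 + ‖b‖ ^ 2 = 1) (ψ : ℂ × ℂ) :
    qwDelta ψ = fun z => AstarMap a b (qwDelta (Amap a b ψ) z) := by
  funext z
  by_cases hz : z = 0
  · simp [qwDelta, hz, AstarMap_Amap hab1]
  · simp [qwDelta, hz, AstarMap, Prod.ext_iff]

/-- `q_n(ψ; x) = p_n(Aψ; x)` for every unit vector `ψ`, and
`V A* = A* U` where `A*` acts componentwise on `ℓ²(ℤ, ℂ²)`. -/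
theorem stmt5 (a b : ℂ) (hab1 : ‖a‖ ^ 2 + ‖b‖ ^ 2 = 1) (hab : a * b ≠ 0) :
    (∀ ψ : ℂ × ℂ, nsq ψ = 1 → ∀ n : ℕ, ∀ x : ℤ,
        qwQ a b ψ n x = qwP a b (Amap a b ψ) n x) ∧
    (∀ f : ℤ → ℂ × ℂ, ∀ x : ℤ,
        qwStepV a b (fun z => AstarMap a b (f z)) x = AstarMap a b (qwStep a b f x)) := by
  refine ⟨fun ψ _ n x => ?_, qwStepV_AstarMap a b⟩
  rw [qwQ, qwP, qwDelta_eq_AstarMap hab1, iterate_qwStepV_AstarMap, nsq_AstarMap hab1]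
end
end

section
/- For every n ∈ ℕ, every y ∈ ℤ, every unit vector φ ∈ ℂ², every ψ ∈ ℂ², and every radius r > 0, the transition amplitude satisfies ⟨Uⁿ(δ₀ ⊗ φ), δ_y ⊗ ψ⟩_{ℓ²} = (1/2πi) ∮_{|z|=r} z^{−y−1} ⟨A(z)ⁿ φ, ψ⟩ dz, where A(z) = P z⁻¹ + Q z is the 2×2 matrix [[a z⁻¹, b z], [−conj(b) z⁻¹, conj(a) z]]. -/
/-!
The amplitudes are the Laurent coefficients of `z ↦ A(z)ⁿ φ`. Writing `c_k(f)` for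
`(1/2πi) ∮ z^{-k-1} f(z) dz`, multiplication of `f` by `z⁻¹` or `z` replaces `c_k` by `c_{k+1}` or
`c_{k-1}`, so the coefficients of `A(z) v(z)` are obtained from those of `v(z)` by exactly one step
of the walk. Since the constant vector `φ` has coefficients `δ₀ ⊗ φ`, induction on `n` identifies
`Uⁿ(δ₀ ⊗ φ)` at every site componentwise (`qw_iterate_eq_coeff`), and pairing with `ψ` is linear.
Every integrand is continuous on the circle, which avoids the origin.
-/

open Filter Topology Asymptotics MeasureTheory

noncomputable section

/-- The standard inner product on `ℂ²`, conjugate-linear in the second argument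
(the convention of the paper): `⟨u, v⟩ = u₁ conj(v₁) + u₂ conj(v₂)`. -/
def innC (u v : ℂ × ℂ) : ℂ :=
  u.1 * (starRingEnd ℂ) v.1 + u.2 * (starRingEnd ℂ) v.2

/-- The matrix `A(z) = P z⁻¹ + Q z = [[a z⁻¹, b z],[−conj(b) z⁻¹, conj(a) z]]` acting on `ℂ²`. -/
def AzMap (a b : ℂ) (z : ℂ) (u : ℂ × ℂ) : ℂ × ℂ :=
  (a * z⁻¹ * u.1 + b * z * u.2,
   -(starRingEnd ℂ) b * z⁻¹ * u.1 + (starRingEnd ℂ) a * z * u.2)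

/-- The `k`-th Laurent coefficient `(1/2πi) ∮_{|z|=r} z^{-k-1} f(z) dz` of `f`, computed on the
circle of radius `r` about the origin. -/
def laurentCoeff (r : ℝ) (f : ℂ → ℂ) (k : ℤ) : ℂ :=
  (2 * Real.pi * Complex.I)⁻¹ * ∮ z in C(0, r), z ^ (-k - 1) * f z

lemma ne_zero_of_mem_circle {r : ℝ} (hr : 0 < r) {z : ℂ} (hz : z ∈ Metric.sphere (0 : ℂ) r) :
    z ≠ 0 := by
  rintro rfl
  simp at hz
  exact hr.ne hz

lemma continuousOn_zpow_circle {r : ℝ} (hr : 0 < r) (k : ℤ) :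
    ContinuousOn (fun z : ℂ => z ^ k) (Metric.sphere 0 r) :=
  continuousOn_id.zpow₀ k fun _ hz => Or.inl (ne_zero_of_mem_circle hr hz)

lemma laurentCoeff_const {r : ℝ} (hr : 0 < r) (c : ℂ) (k : ℤ) :
    laurentCoeff r (fun _ => c) k = if k = 0 then c else 0 := by
  have hcomm : (∮ z in C(0, r), z ^ (-k - 1) * c) = c * ∮ z in C(0, r), z ^ (-k - 1) := by
    rw [← circleIntegral.integral_const_mul]
    simp only [mul_comm]
  rw [laurentCoeff, hcomm]
  split_ifs with hk
  · subst hk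
    have h := circleIntegral.integral_sub_center_inv (0 : ℂ) hr.ne'
    simp only [sub_zero] at h
    simp only [neg_zero, zero_sub, zpow_neg_one, h]
    field_simp [Complex.two_pi_I_ne_zero]
  · have h := circleIntegral.integral_sub_zpow_of_ne (n := -k - 1) (by omega) 0 0 r
    simp only [sub_zero] at h
    simp [h]

lemma laurentCoeff_add {r : ℝ} (hr : 0 < r) {f g : ℂ → ℂ}
    (hf : ContinuousOn f (Metric.sphere 0 r)) (hg : ContinuousOn g (Metric.sphere 0 r)) (k : ℤ) :
    laurentCoeff r (fun z => f z + g z) k = laurentCoeff r f k + laurentCoeff r g k := by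
  simp only [laurentCoeff, mul_add]
  rw [circleIntegral.integral_add
    (((continuousOn_zpow_circle hr _).fun_mul hf).circleIntegrable hr.le)
    (((continuousOn_zpow_circle hr _).fun_mul hg).circleIntegrable hr.le), mul_add]

lemma laurentCoeff_const_mul (r : ℝ) (c : ℂ) (f : ℂ → ℂ) (k : ℤ) :
    laurentCoeff r (fun z => c * f z) k = c * laurentCoeff r f k := by
  simp only [laurentCoeff, mul_left_comm _ c]
  rw [circleIntegral.integral_const_mul, mul_left_comm]

lemma laurentCoeff_inv_mul {r : ℝ} (hr : 0 < r) (f : ℂ → ℂ) (k : ℤ) :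
    laurentCoeff r (fun z => z⁻¹ * f z) k = laurentCoeff r f (k + 1) := by
  unfold laurentCoeff
  congr 1
  refine circleIntegral.integral_congr hr.le fun z hz => ?_
  have hz0 := ne_zero_of_mem_circle hr hz
  simp only
  rw [← mul_assoc, ← zpow_sub_one₀ hz0]
  congr 2
  ring

lemma laurentCoeff_self_mul {r : ℝ} (hr : 0 < r) (f : ℂ → ℂ) (k : ℤ) :
    laurentCoeff r (fun z => z * f z) k = laurentCoeff r f (k - 1) := by
  unfold laurentCoeff
  congr 1
  refine circleIntegral.integral_congr hr.le fun z hz => ?_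
  have hz0 := ne_zero_of_mem_circle hr hz
  simp only
  rw [← mul_assoc, ← zpow_add_one₀ hz0]
  congr 2
  ring

/-- One row `(p z⁻¹, q z)` of `A(z)` acts on Laurent coefficients as one component of the walk. -/
lemma laurentCoeff_row {r : ℝ} (hr : 0 < r) (p q : ℂ) {f g : ℂ → ℂ}
    (hf : ContinuousOn f (Metric.sphere 0 r)) (hg : ContinuousOn g (Metric.sphere 0 r)) (k : ℤ) :
    laurentCoeff r (fun z => p * z⁻¹ * f z + q * z * g z) k =
      p * laurentCoeff r f (k + 1) + q * laurentCoeff r g (k - 1) := by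
  have hinv : ContinuousOn (fun z : ℂ => z⁻¹) (Metric.sphere 0 r) :=
    continuousOn_id.inv₀ fun _ hz => ne_zero_of_mem_circle hr hz
  simp only [mul_assoc]
  rw [laurentCoeff_add hr (continuousOn_const.fun_mul (hinv.fun_mul hf))
      (continuousOn_const.fun_mul ((continuousOn_id' _).fun_mul hg)),
    laurentCoeff_const_mul, laurentCoeff_const_mul, laurentCoeff_inv_mul hr,
    laurentCoeff_self_mul hr]

lemma continuousOn_AzMap_iterate (a b : ℂ) (φ : ℂ × ℂ) {r : ℝ} (hr : 0 < r) (n : ℕ) :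
    ContinuousOn (fun z => (AzMap a b z)^[n] φ) (Metric.sphere 0 r) := by
  induction n with
  | zero => exact continuousOn_const
  | succ n ih =>
    have hinv : ContinuousOn (fun z : ℂ => z⁻¹) (Metric.sphere 0 r) :=
      continuousOn_id.inv₀ fun _ hz => ne_zero_of_mem_circle hr hz
    simp only [Function.iterate_succ_apply', AzMap]
    fun_prop

/-- The walk started from `δ₀ ⊗ φ` records the Laurent coefficients of `z ↦ A(z)ⁿ φ`. -/
lemma qw_iterate_eq_coeff (a b : ℂ) (φ : ℂ × ℂ) {r : ℝ} (hr : 0 < r) (n : ℕ) (y : ℤ) :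
    ((qwStep a b)^[n] (qwDelta φ)) y =
      (laurentCoeff r (fun z => ((AzMap a b z)^[n] φ).1) y,
       laurentCoeff r (fun z => ((AzMap a b z)^[n] φ).2) y) := by
  induction n generalizing y with
  | zero =>
    simp only [Function.iterate_zero, id_eq, laurentCoeff_const hr, qwDelta]
    split_ifs <;> rfl
  | succ n ih =>
    have hc := continuousOn_AzMap_iterate a b φ hr n
    simp only [Function.iterate_succ_apply', AzMap, qwStep, ih]
    rw [laurentCoeff_row hr _ _ hc.fst hc.snd, laurentCoeff_row hr _ _ hc.fst hc.snd]

/-- the contour-integral formula for the transition amplitude: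
`⟨Uⁿ(δ₀ ⊗ φ), δ_y ⊗ ψ⟩ = (1/2πi) ∮_{|z|=r} z^{−y−1} ⟨A(z)ⁿ φ, ψ⟩ dz` for every `r > 0`. -/
theorem stmt6 (a b : ℂ) (hab1 : ‖a‖ ^ 2 + ‖b‖ ^ 2 = 1) (hab : a * b ≠ 0)
    (φ : ℂ × ℂ) (hφ : nsq φ = 1) (ψ : ℂ × ℂ) (n : ℕ) (y : ℤ) (r : ℝ) (hr : 0 < r) :
    innC (((qwStep a b)^[n] (qwDelta φ)) y) ψ =
      (2 * Real.pi * Complex.I)⁻¹ *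
        ∮ z in C(0, r), z ^ (-y - 1) * innC ((AzMap a b z)^[n] φ) ψ := by
  have hc := continuousOn_AzMap_iterate a b φ hr n
  rw [qw_iterate_eq_coeff a b φ hr]
  change _ = laurentCoeff r (fun z => innC ((AzMap a b z)^[n] φ) ψ) y
  simp only [innC, mul_comm _ ((starRingEnd ℂ) _)]
  rw [laurentCoeff_add hr (continuousOn_const.fun_mul hc.fst) (continuousOn_const.fun_mul hc.snd),
    laurentCoeff_const_mul, laurentCoeff_const_mul]
end
end
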